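/- arXiv:math/0311303 — 4 statements merged into one kernel-verified Lean document; each statement's English description precedes it below -/
import Mathlib

section
/- τ_{2n} is a cocycle in the normalized Hochschild cochain complex of A^pol_{2n}: τ_{2n}(a_0⊗⋯⊗a_{2n}) vanishes whenever one of a_1,…,a_{2n} lies in K·1, and for all a_0,…,a_{2n+1} ∈ A^pol_{2n} one has τ_{2n}(a_0⋆a_1⊗a_2⊗⋯⊗a_{2n+1}) + ∑_{j=1}^{2n} (−1)^j τ_{2n}(a_0⊗⋯⊗a_j⋆a_{j+1}⊗⋯⊗a_{2n+1}) − τ_{2n}(a_{2n+1}⋆a_0⊗a_1⊗⋯⊗a_{2n}) = 0. -/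
noncomputable section
open MvPolynomial MeasureTheory

/-- The ground ring `K = ℂ[ε,ε⁻¹]` of Laurent polynomials in `ε`. -/
abbrev Kc : Type := LaurentPolynomial ℂ

/-- The element `ε ∈ K`. -/
def eps : Kc := LaurentPolynomial.T 1

/-- The underlying space of the polynomial Weyl algebra `A^pol_{2n}`:
polynomials in the variables `y_1, …, y_{2n}` (with `y_{2r-1} = p_r`, `y_{2r} = q_r`,
`0`-indexed below) over `K`. -/
abbrev Apol (n : ℕ) : Type := MvPolynomial (Fin (2*n)) Kc

/-- The `k`-fold tensor power `A^{⊗k}` of `A = A^pol_{2n}` over `K`, realized as the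
polynomial ring in `k` groups of `2n` variables. -/
abbrev Tens (n k : ℕ) : Type := MvPolynomial (Fin k × Fin (2*n)) Kc

/-- index of `p_r` among the variables `y` (0-indexed). -/
def pVar (n : ℕ) (r : Fin n) : Fin (2*n) := ⟨2*r.1, by have := r.2; omega⟩
/-- index of `q_r` among the variables `y` (0-indexed). -/
def qVar (n : ℕ) (r : Fin n) : Fin (2*n) := ⟨2*r.1+1, by have := r.2; omega⟩

/-- Partial derivative in the variable `y_v` of the `i`-th tensor factor, as a `K`-linear
endomorphism of `A^{⊗k}`. -/
def Dop (n k : ℕ) (i : Fin k) (v : Fin (2*n)) : Module.End Kc (Tens n k) :=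
  (pderiv (i, v)).toLinearMap

/-- The operator `α_{ij}` on `A^{⊗k}`:
`α_{ij} = (1/2) ∑_r (∂_{p_r}⊗∂_{q_r} − ∂_{q_r}⊗∂_{p_r})` acting on factors `i` and `j`.
By construction `α_{ji} = −α_{ij}`. -/
def alphaOp (n k : ℕ) (i j : Fin k) : Module.End Kc (Tens n k) :=
  algebraMap ℂ Kc (1/2) • ∑ r : Fin n,
    (Dop n k i (pVar n r) * Dop n k j (qVar n r) - Dop n k i (qVar n r) * Dop n k j (pVar n r))

/-- The operator `π_{2n}` on `A^{⊗(2n+1)}`: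
`π_{2n}(a_0⊗⋯⊗a_{2n}) = ∑_{σ∈S_{2n}} sign(σ) a_0⊗∂_{y_{σ(1)}}a_1⊗⋯⊗∂_{y_{σ(2n)}}a_{2n}`. -/
def piOp (n : ℕ) : Module.End Kc (Tens n (2*n+1)) :=
  ∑ σ : Equiv.Perm (Fin (2*n)),
    (Equiv.Perm.sign σ : ℤ) •
      (List.ofFn (fun m : Fin (2*n) => Dop n (2*n+1) m.succ (σ m))).prod

/-- Pairs `i < j` in `Fin m`. -/
abbrev Pairs (m : ℕ) : Type := {p : Fin m × Fin m // p.1 < p.2}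

/-- The simplex `Δ_m = {0 ≤ u_1 ≤ ⋯ ≤ u_m ≤ 1}` in `ℝ^m`. -/
def simplexSet (m : ℕ) : Set (Fin m → ℝ) :=
  {u | (∀ i, 0 ≤ u i ∧ u i ≤ 1) ∧ ∀ i j : Fin m, i ≤ j → u i ≤ u j}

/-- Extension of `u : ℝ^m` to `ℝ^{m+1}` by the convention `u_0 = 0`. -/
def cons0 (m : ℕ) (u : Fin m → ℝ) : Fin (m+1) → ℝ := Fin.cons 0 u

/-- The (commuting) product `∏_{i<j} α_{ij}^{K(i,j)}`. -/
def alphaPowProd (n k : ℕ) (K : Pairs k → ℕ) : Module.End Kc (Tens n k) :=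
  (Finset.univ.toList.map (fun p : Pairs k => alphaOp n k p.1.1 p.1.2 ^ (K p))).prod

/-- The Hochschild cochain `τ_{2n} : A^{⊗(2n+1)} → K`,
`τ_{2n}(a) = μ_{2n} ∫_{Δ_{2n}} ∏_{0≤i<j≤2n} e^{ε(2u_i−2u_j+1)α_{ij}} π_{2n}(a) du`,
with the exponentials expanded as (locally finite) Taylor series and integrated term by
term; `μ` takes the product of the constant terms of the factors. -/
def tau (n : ℕ) (a : Tens n (2*n+1)) : Kc :=
  ∑ K ∈ Fintype.piFinset (fun _ : Pairs (2*n+1) => Finset.range (a.totalDegree + 1)),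
    (algebraMap ℂ Kc
        ((((∫ u in simplexSet (2*n),
            ∏ p : Pairs (2*n+1),
              (2 * cons0 (2*n) u p.1.1 - 2 * cons0 (2*n) u p.1.2 + 1) ^ (K p)) : ℝ) : ℂ)
          * (∏ p : Pairs (2*n+1), ((K p).factorial : ℂ))⁻¹)
        * eps ^ (∑ p : Pairs (2*n+1), K p)) •
      constantCoeff (alphaPowProd n (2*n+1) K (piOp n a))

/-- The embedding of `A` as the `i`-th tensor factor of `A^{⊗k}`. -/
def embA (n k : ℕ) (i : Fin k) : Apol n →ₐ[Kc] Tens n k :=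
  rename (fun v => (i, v))

/-- The elementary tensor `a_0 ⊗ ⋯ ⊗ a_{k-1} ∈ A^{⊗k}`. -/
def elemT {n k : ℕ} (a : Fin k → Apol n) : Tens n k :=
  ∏ i : Fin k, embA n k i (a i)

/-- `exp(ε f)` applied to `a`, for a locally nilpotent operator `f` that strictly decreases
total degree (so that the series is finite on every argument). -/
def expEps {n k : ℕ} (f : Module.End Kc (Tens n k)) (a : Tens n k) : Tens n k :=
  ∑ m ∈ Finset.range (a.totalDegree + 1),
    (algebraMap ℂ Kc ((m.factorial : ℂ)⁻¹) * eps ^ m) • (f ^ m) a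

/-- The Moyal star product `f ⋆ g = m(exp(εα)(f⊗g))` on `A^pol_{2n}`. -/
def moyal (n : ℕ) (f g : Apol n) : Apol n :=
  aeval (fun v : Fin 2 × Fin (2*n) => (X v.2 : Apol n))
    (expEps (alphaOp n 2 0 1) (elemT ![f, g]))

/-- The bracket `[f,g]_ε = (1/ε)(f⋆g − g⋆f)`. -/
def brkt (n : ℕ) (f g : Apol n) : Apol n :=
  (LaurentPolynomial.T (-1) : Kc) • (moyal n f g - moyal n g f)

/-- `sp_{2n}`, identified with the space of homogeneous quadratic polynomials in the `y`'s
with complex coefficients, as a ℂ-submodule of `A^pol_{2n}`. -/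
def spSub (n : ℕ) : Submodule ℂ (Apol n) :=
  Submodule.span ℂ {f : Apol n | ∃ i j : Fin (2*n), f = X i * X j}


/-- The `j`-th face of the Hochschild differential applied to `a_0,…,a_{k+1}`:
multiply the `j`-th and `(j+1)`-st entries with the Moyal product
(`j` ranges over `0,…,k`). -/
def hochFace (n k : ℕ) (j : Fin (k+1)) (a : Fin (k+2) → Apol n) : Fin (k+1) → Apol n :=
  fun i =>
    if h1 : i.1 < j.1 then a ⟨i.1, by have := i.2; omega⟩
    else if h2 : i.1 = j.1 then
      moyal n (a ⟨j.1, by have := j.2; omega⟩) (a ⟨j.1+1, by have := j.2; omega⟩)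
    else a ⟨i.1+1, by have := i.2; omega⟩

/-!
A constant-coefficient operator on polynomials is determined by its symbol, so `τ` pairs
`a_0 ⊗ ⋯ ⊗ a_{2n}` with the symbol `∫_Δ exp(Q) · det(Y_1, …, Y_{2n})`, where `Y_i` is the vector of
symbols of the partial derivatives of the `i`-th factor and `Q` is affine in `u`. Multiplying two
neighbouring factors adds their symbols, and the Moyal product adds a constant to the exponent; this
constant is exactly what makes the exponent of the `e`-th term of the coboundary the restriction of
the exponent on `Δ_{2n+1}` to its `e`-th face. The determinant of that term is the sum of two
consecutive maximal minors `D_k` of `(Y_1, …, Y_{2n+1})`. By Stokes' theorem the alternating sum is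
a multiple of `∑ k, (-1)^k D_k ∂_k Q`, and `∂_k Q` is a fixed linear form evaluated at `Y_{k+1}`, so
this sum is the Laplace expansion of a determinant with linearly dependent columns.
-/

section DiffOp

variable {σ τ R : Type*} [CommRing R]

lemma pderiv_pderiv_comm (i j : σ) (p : MvPolynomial σ R) :
    pderiv i (pderiv j p) = pderiv j (pderiv i p) := by
  classical
  let D (i : σ) : Derivation R (MvPolynomial σ R) (MvPolynomial σ R) := pderiv i
  have h : ⁅D i, D j⁆ = 0 := derivation_ext fun l => by
    simp [D, Derivation.commutator_apply, pderiv_X, Pi.single_apply, apply_ite]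
  simpa [D, Derivation.commutator_apply, sub_eq_zero] using DFunLike.congr_fun h p

open scoped IsMulCommutative in
/-- The constant-coefficient differential operator with symbol `P`: the variable `X i` acts as
`∂/∂X i`. -/
def diffOp : MvPolynomial σ R →ₐ[R] Module.End R (MvPolynomial σ R) :=
  let partials : Set (Module.End R (MvPolynomial σ R)) :=
    Set.range fun i => (pderiv i).toLinearMap
  have : IsMulCommutative (Algebra.adjoin R partials) := by
    refine Algebra.isMulCommutative_adjoin R ?_
    rintro _ ⟨i, rfl⟩ _ ⟨j, rfl⟩
    exact LinearMap.ext (pderiv_pderiv_comm i j)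
  (Algebra.adjoin R partials).val.comp
    (aeval fun i => ⟨(pderiv i).toLinearMap, Algebra.subset_adjoin ⟨i, rfl⟩⟩)

lemma diffOp_X (i : σ) : diffOp (X i : MvPolynomial σ R) = (pderiv i).toLinearMap := by
  simp [diffOp]

lemma diffOp_C (c : R) (b : MvPolynomial σ R) : diffOp (C c) b = c • b := by
  rw [← algebraMap_eq, AlgHom.commutes, Module.algebraMap_end_apply]

lemma diffOp_mul (P Q b : MvPolynomial σ R) : diffOp (P * Q) b = diffOp P (diffOp Q b) := by
  rw [map_mul, Module.End.mul_apply]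

lemma diffOp_mul_X (P b : MvPolynomial σ R) (i : σ) :
    diffOp (P * X i) b = diffOp P (pderiv i b) := by
  rw [diffOp_mul, diffOp_X]
  rfl

lemma diffOp_eq_zero_of_coeff {m : ℕ} {P b : MvPolynomial σ R} (hP : P ∈ idealOfVars σ R ^ m)
    (hb : ∀ s : σ →₀ ℕ, m ≤ s.degree → coeff s b = 0) : diffOp P b = 0 := by
  induction m generalizing P b with
  | zero => rw [show b = 0 from MvPolynomial.ext _ _ fun s => by simpa using hb s, map_zero]
  | succ m ih =>
    rw [pow_succ] at hP
    refine Submodule.mul_induction_on hP (fun p hp q hq => ?_) fun p q hp hq => ?_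
    · refine Submodule.span_induction ?_ ?_ ?_ ?_ hq
      · rintro _ ⟨i, rfl⟩
        rw [diffOp_mul_X]
        refine ih hp fun s hs => ?_
        rw [coeff_pderiv, hb _ (by simpa using hs), zero_mul]
      · simp
      · intro q r _ _ hq hr
        rw [mul_add, map_add, LinearMap.add_apply, hq, hr, add_zero]
      · intro r q _ hq
        rw [smul_eq_mul, mul_left_comm, diffOp_mul, hq, map_zero]
    · rw [map_add, LinearMap.add_apply, hp, hq, add_zero]

lemma diffOp_eq_zero {m : ℕ} {P b : MvPolynomial σ R} (hP : P ∈ idealOfVars σ R ^ m)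
    (hb : b.totalDegree < m) : diffOp P b = 0 :=
  diffOp_eq_zero_of_coeff hP fun _ hs => coeff_eq_zero_of_totalDegree_lt (hb.trans_le hs)

lemma diffOp_congr {m : ℕ} {P Q b : MvPolynomial σ R} (hPQ : P - Q ∈ idealOfVars σ R ^ m)
    (hb : b.totalDegree < m) : diffOp P b = diffOp Q b := by
  rw [← sub_eq_zero, ← LinearMap.sub_apply, ← map_sub, diffOp_eq_zero hPQ hb]

/-- The pairing of a polynomial `b` with symbols, `P ↦ (P(∂) b)(0)`. -/
def symbolPairing (b : MvPolynomial σ R) : MvPolynomial σ R →ₗ[R] R :=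
  lcoeff R 0 ∘ₗ LinearMap.applyₗ b ∘ₗ diffOp.toLinearMap

lemma symbolPairing_apply (b P : MvPolynomial σ R) :
    symbolPairing b P = constantCoeff (diffOp P b) := rfl

lemma symbolPairing_congr {b P Q : MvPolynomial σ R} {m : ℕ}
    (hPQ : P - Q ∈ idealOfVars σ R ^ m) (hb : b.totalDegree < m) :
    symbolPairing b P = symbolPairing b Q := by
  rw [symbolPairing_apply, diffOp_congr hPQ hb, symbolPairing_apply]

/-- The effect on symbols of pulling a polynomial back along `rename f`. -/
def symbolPullback [Fintype τ] [DecidableEq σ] (f : τ → σ) :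
    MvPolynomial σ R →ₐ[R] MvPolynomial τ R :=
  aeval fun i => ∑ j with f j = i, X j

lemma pderiv_rename_eq_sum [Fintype τ] [DecidableEq σ] (f : τ → σ) (i : σ)
    (b : MvPolynomial τ R) :
    pderiv i (rename f b) = rename f (∑ j with f j = i, pderiv j b) := by
  classical
  induction b using MvPolynomial.induction_on with
  | C a => simp
  | add p q hp hq => simp only [map_add, hp, hq, Finset.sum_add_distrib]
  | mul_X p j hp =>
    have hX : pderiv i (X (f j) : MvPolynomial σ R) =
        rename f (∑ l with f l = i, pderiv l (X j)) := by
      by_cases h : f j = i <;> simp [pderiv_X, Pi.single_apply, h]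
    simp only [map_mul, rename_X, pderiv_mul, hp, hX, Finset.sum_add_distrib, map_add,
      ← Finset.sum_mul, ← Finset.mul_sum]

lemma diffOp_rename [Fintype τ] [DecidableEq σ] (f : τ → σ) (P : MvPolynomial σ R)
    (b : MvPolynomial τ R) :
    diffOp P (rename f b) = rename f (diffOp (symbolPullback f P) b) := by
  induction P using MvPolynomial.induction_on generalizing b with
  | C c => simp only [symbolPullback, aeval_C, algebraMap_eq, diffOp_C, map_smul]
  | add p q hp hq => simp only [map_add, LinearMap.add_apply, hp, hq]
  | mul_X p i hp =>
    have hX : diffOp (∑ j with f j = i, X j) b = ∑ j with f j = i, pderiv j b := by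
      simp only [map_sum, LinearMap.sum_apply, diffOp_X]
      rfl
    rw [diffOp_mul_X, pderiv_rename_eq_sum, hp, map_mul, diffOp_mul, symbolPullback, aeval_X, hX]

lemma symbolPairing_rename [Fintype τ] [DecidableEq σ] (f : τ → σ) (P : MvPolynomial σ R)
    (b : MvPolynomial τ R) :
    symbolPairing (rename f b) P = symbolPairing b (symbolPullback f P) := by
  rw [symbolPairing_apply, diffOp_rename, constantCoeff_rename, symbolPairing_apply]

lemma symbolPairing_diffOp (b P Q : MvPolynomial σ R) :
    symbolPairing (diffOp Q b) P = symbolPairing b (P * Q) := by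
  rw [symbolPairing_apply, symbolPairing_apply, diffOp_mul]

lemma diffOp_rename_mul {f : τ → σ} (hf : Function.Injective f) {g : MvPolynomial σ R}
    (hg : ∀ j, pderiv (f j) g = 0) (P h : MvPolynomial τ R) :
    diffOp (rename f P) (rename f h * g) = rename f (diffOp P h) * g := by
  induction P using MvPolynomial.induction_on generalizing h with
  | C c => simp only [rename_C, diffOp_C, map_smul, smul_mul_assoc]
  | add p q hp hq => simp only [map_add, LinearMap.add_apply, hp, hq, add_mul]
  | mul_X p i hp =>
    rw [map_mul (rename f), rename_X, diffOp_mul_X, pderiv_mul, hg, mul_zero, add_zero,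
      pderiv_rename hf, hp, diffOp_mul_X]

end DiffOp

section TruncExp

variable {B : Type*} [CommRing B] {J : Ideal B} {M N : ℕ}

lemma isNilpotent_mk_pow {x : B} (hx : x ∈ J) : IsNilpotent (Ideal.Quotient.mk (J ^ N) x) :=
  ⟨N, by rw [← map_pow, Ideal.Quotient.eq_zero_iff_mem]; exact Ideal.pow_mem_pow hx N⟩

variable [Algebra ℚ B]

/-- The Taylor polynomial of degree `M` of the exponential series. -/
def truncExp (M : ℕ) : Polynomial ℚ := PowerSeries.trunc (M + 1) (PowerSeries.exp ℚ)

lemma aeval_truncExp (M : ℕ) (x : B) :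
    Polynomial.aeval x (truncExp M) =
      ∑ m ∈ Finset.range (M + 1), (m.factorial : ℚ)⁻¹ • x ^ m := by
  rw [Polynomial.aeval_def, truncExp, PowerSeries.eval₂_trunc_eq_sum_range]
  simp [PowerSeries.coeff_exp, Algebra.smul_def]

lemma map_aeval_truncExp {S F : Type*} [CommRing S] [Algebra ℚ S] [FunLike F B S]
    [RingHomClass F B S] (f : F) (M : ℕ) (x : B) :
    f (Polynomial.aeval x (truncExp M)) = Polynomial.aeval (f x) (truncExp M) := by
  simp only [aeval_truncExp, map_sum, map_rat_smul, map_pow]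

lemma mk_aeval_truncExp (hNM : N ≤ M) {x : B} (hx : x ∈ J) :
    Ideal.Quotient.mk (J ^ (N + 1)) (Polynomial.aeval x (truncExp M)) =
      IsNilpotent.exp (Ideal.Quotient.mk (J ^ (N + 1)) x) := by
  have hpow : Ideal.Quotient.mk (J ^ (N + 1)) x ^ (M + 1) = 0 := by
    rw [← map_pow, Ideal.Quotient.eq_zero_iff_mem]
    exact Ideal.pow_le_pow_right (by lia) (Ideal.pow_mem_pow hx _)
  rw [IsNilpotent.exp_eq_sum hpow, aeval_truncExp, map_sum]
  exact Finset.sum_congr rfl fun m _ => by rw [map_rat_smul, map_pow]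

lemma aeval_truncExp_add_sub_mem (hNM : N ≤ M) {x y : B} (hx : x ∈ J) (hy : y ∈ J) :
    Polynomial.aeval (x + y) (truncExp M) -
      Polynomial.aeval x (truncExp M) * Polynomial.aeval y (truncExp M) ∈ J ^ (N + 1) := by
  rw [← Ideal.Quotient.eq, map_mul, mk_aeval_truncExp hNM (J.add_mem hx hy),
    mk_aeval_truncExp hNM hx, mk_aeval_truncExp hNM hy, map_add,
    IsNilpotent.exp_add_of_commute (.all _ _) (isNilpotent_mk_pow hx) (isNilpotent_mk_pow hy)]

lemma exp_sum_of_isNilpotent {ι : Type*} (s : Finset ι) {x : ι → B}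
    (hx : ∀ i, IsNilpotent (x i)) :
    IsNilpotent.exp (∑ i ∈ s, x i) = ∏ i ∈ s, IsNilpotent.exp (x i) := by
  classical
  induction s using Finset.induction_on with
  | empty => simp
  | insert i s hi ih =>
    rw [Finset.sum_insert hi, Finset.prod_insert hi, ← ih]
    exact IsNilpotent.exp_add_of_commute (.all _ _) (hx i) (isNilpotent_sum fun j _ => hx j)

lemma prod_aeval_truncExp_sub_mem {ι : Type*} [Fintype ι] (hNM : N ≤ M) {x : ι → B}
    (hx : ∀ i, x i ∈ J) :
    ∏ i, Polynomial.aeval (x i) (truncExp N) - Polynomial.aeval (∑ i, x i) (truncExp M) ∈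
      J ^ (N + 1) := by
  rw [← Ideal.Quotient.eq, mk_aeval_truncExp hNM (J.sum_mem fun i _ => hx i), map_prod, map_sum,
    exp_sum_of_isNilpotent _ fun i => isNilpotent_mk_pow (hx i)]
  exact Finset.prod_congr rfl fun i _ => mk_aeval_truncExp le_rfl (hx i)

end TruncExp

section Simplex

variable {B : Type*} [Zero B] [One B] {d : ℕ}

/-- The vertices `(0, w_1, …, w_d, 1)` of the subdivision of `[0,1]` given by `w`. -/
def extCoords (w : Fin d → B) : Fin (d + 2) → B :=
  Fin.snoc (α := fun _ => B) (Fin.cons 0 w) 1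

/-- The `e`-th face map of simplices in these coordinates: it repeats the `e`-th entry of
`(0, w_1, …, w_d, 1)`. -/
def dupCoord (e : Fin (d + 2)) (w : Fin d → B) : Fin (d + 1) → B :=
  fun i => extCoords w (e.predAbove i.castSucc.succ)

@[simp] lemma extCoords_last (w : Fin d → B) : extCoords w (Fin.last (d + 1)) = 1 := by
  simp [extCoords]

lemma extCoords_castSucc (w : Fin d → B) (i : Fin (d + 1)) :
    extCoords w i.castSucc = (Fin.cons 0 w : Fin (d + 1) → B) i := by
  simp [extCoords]

@[simp] lemma extCoords_zero (w : Fin d → B) : extCoords w 0 = 0 :=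
  extCoords_castSucc w 0

@[simp] lemma extCoords_castSucc_succ (w : Fin d → B) (i : Fin d) :
    extCoords w i.castSucc.succ = w i := by
  rw [Fin.succ_castSucc, extCoords_castSucc, Fin.cons_succ]

lemma cons_zero_dupCoord (e : Fin (d + 2)) (w : Fin d → B) (i : Fin (d + 2)) :
    (Fin.cons 0 (dupCoord e w) : Fin (d + 2) → B) i = extCoords w (e.predAbove i.castSucc) := by
  cases i using Fin.cases <;> simp [dupCoord]

lemma insertNth_extCoords_succ (k : Fin (d + 1)) (w : Fin d → B) :
    (k.insertNth (extCoords w k.succ) w : Fin (d + 1) → B) = dupCoord k.succ w := by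
  rw [Fin.insertNth_eq_iff]
  refine ⟨by simp [dupCoord, Fin.succ_castSucc, - Fin.castSucc_succ], funext fun j => ?_⟩
  have hj : (k.succAbove j).castSucc.succ = k.succ.castSucc.succAbove j.castSucc.succ := by
    rw [← Fin.succ_castSucc, Fin.succ_succAbove_succ, Fin.castSucc_succAbove_castSucc]
  rw [Fin.removeNth, dupCoord, hj, Fin.predAbove_succAbove, extCoords_castSucc_succ]

lemma predAbove_succ_succAbove {n : ℕ} (p i : Fin n) :
    p.predAbove (p.succ.succAbove i) = i := by
  rcases le_or_gt i p with h | h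
  · rw [Fin.succAbove_succ_of_le p i h, Fin.predAbove_castSucc_of_le p i h]
  · rw [Fin.succAbove_succ_of_lt p i h, Fin.predAbove_succ_of_le p i h.le]

lemma insertNth_extCoords_castSucc (k : Fin (d + 1)) (w : Fin d → B) :
    (k.insertNth (extCoords w k.castSucc) w : Fin (d + 1) → B) = dupCoord k.castSucc w := by
  rw [Fin.insertNth_eq_iff]
  refine ⟨by simp [dupCoord], funext fun j => ?_⟩
  have hj : (k.succAbove j).castSucc.succ = k.castSucc.succ.succAbove j.castSucc.succ := by
    rw [Fin.succ_succAbove_succ, Fin.castSucc_succAbove_castSucc]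
  rw [Fin.removeNth, dupCoord, hj, predAbove_succ_succAbove, extCoords_castSucc_succ]

lemma extCoords_insertNth (k : Fin (d + 1)) (t : B) (w : Fin d → B) :
    extCoords (k.insertNth t w : Fin (d + 1) → B) =
      k.castSucc.succ.insertNth (α := fun _ => B) t (extCoords w) := by
  rw [Fin.eq_insertNth_iff]
  refine ⟨by simp, funext fun j => ?_⟩
  rw [Fin.removeNth]
  cases j using Fin.lastCases with
  | last => simp
  | cast j =>
    cases j using Fin.cases with
    | zero => simp
    | succ j => simp

end Simplex

section SimplexSet

variable {d : ℕ}

lemma mem_simplexSet_iff_monotone {w : Fin d → ℝ} :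
    w ∈ simplexSet d ↔ Monotone (extCoords w) := by
  constructor
  · rintro ⟨hw, hmono⟩ i j hij
    cases j using Fin.lastCases with
    | last =>
      cases i using Fin.lastCases with
      | last => exact le_rfl
      | cast i => cases i using Fin.cases <;> simp [(hw _).2]
    | cast j =>
      cases i using Fin.lastCases with
      | last => exact absurd hij (by simp)
      | cast i =>
        cases i using Fin.cases <;> cases j using Fin.cases
        · simp
        · simp [(hw _).1]
        · simp at hij
        · simpa using hmono _ _ (by simpa using hij)
  · refine fun h => ⟨fun i => ⟨?_, ?_⟩, fun i j hij => ?_⟩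
    · simpa using h (Fin.zero_le i.castSucc.succ)
    · simpa using h (Fin.le_last i.castSucc.succ)
    · simpa using h (Fin.succ_le_succ_iff.2 (Fin.castSucc_le_castSucc_iff.2 hij))

lemma insertNth_mem_simplexSet_iff {w : Fin d → ℝ} {t : ℝ} {k : Fin (d + 1)} :
    (k.insertNth t w : Fin (d + 1) → ℝ) ∈ simplexSet (d + 1) ↔
      w ∈ simplexSet d ∧ t ∈ Set.Icc (extCoords w k.castSucc) (extCoords w k.succ) := by
  simp only [mem_simplexSet_iff_monotone, extCoords_insertNth]
  refine ⟨fun h => ⟨fun i j hij => ?_, ?_, ?_⟩,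
    fun ⟨hw, ht⟩ => Fin.insertNth_monotone hw k t ht.1 ht.2⟩
  · simpa using h ((Fin.strictMono_succAbove k.castSucc.succ).monotone hij)
  · simpa only [Fin.insertNth_apply_succAbove, Fin.insertNth_apply_same] using
      h ((Fin.succAbove_lt_iff_castSucc_lt k.castSucc.succ k.castSucc).2
        Fin.castSucc_lt_succ).le
  · simpa only [Fin.insertNth_apply_succAbove, Fin.insertNth_apply_same] using
      h ((Fin.lt_succAbove_iff_le_castSucc k.castSucc.succ k.succ).2
        (Fin.succ_castSucc k).ge).le

lemma isCompact_simplexSet (d : ℕ) : IsCompact (simplexSet d) := by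
  refine isCompact_Icc.of_isClosed_subset (s := Set.Icc 0 1) ?_
    fun u hu => ⟨fun i => (hu.1 i).1, fun i => (hu.1 i).2⟩
  simp only [simplexSet, Set.ofPred_and, Set.ofPred_forall]
  refine (isClosed_iInter fun i => ?_).inter
    (isClosed_iInter fun i => isClosed_iInter fun j => isClosed_iInter fun _ => ?_)
  · exact (isClosed_le continuous_const (continuous_apply i)).inter
      (isClosed_le (continuous_apply i) continuous_const)
  · exact isClosed_le (continuous_apply i) (continuous_apply j)

lemma measurableSet_simplexSet (d : ℕ) : MeasurableSet (simplexSet d) :=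
  (isCompact_simplexSet d).measurableSet

lemma setIntegral_simplexSet_succ (k : Fin (d + 1)) {f : (Fin (d + 1) → ℝ) → ℝ}
    (hf : Continuous f) :
    ∫ u in simplexSet (d + 1), f u =
      ∫ w in simplexSet d, ∫ t in extCoords w k.castSucc..extCoords w k.succ,
        f (k.insertNth t w) := by
  rw [← integral_indicator (measurableSet_simplexSet _),
    ← integral_indicator (measurableSet_simplexSet _)]
  have hpres := (volume_preserving_piFinSuccAbove (fun _ : Fin (d + 1) => ℝ) k).symm
  have hint : Integrable ((simplexSet (d + 1)).indicator f) :=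
    (integrable_indicator_iff (measurableSet_simplexSet _)).2
      (hf.continuousOn.integrableOn_compact (isCompact_simplexSet _))
  have hint' := (hpres.integrable_comp_emb (MeasurableEquiv.measurableEmbedding _)).2 hint
  rw [← hpres.integral_comp']
  rw [Measure.volume_eq_prod] at hint' ⊢
  refine (integral_prod_symm _ hint').trans (integral_congr_ae (.of_forall fun w => ?_))
  change ∫ t : ℝ, (simplexSet (d + 1)).indicator f (k.insertNth t w) = _
  by_cases hw : w ∈ simplexSet d
  · have hle : extCoords w k.castSucc ≤ extCoords w k.succ :=
      mem_simplexSet_iff_monotone.1 hw (Fin.castSucc_le_succ k)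
    rw [Set.indicator_of_mem hw, intervalIntegral.integral_of_le hle,
      ← integral_Icc_eq_integral_Ioc, ← integral_indicator measurableSet_Icc]
    simp only [Set.indicator, insertNth_mem_simplexSet_iff, hw, true_and]
  · simp [Set.indicator, insertNth_mem_simplexSet_iff, hw]

end SimplexSet

section Stokes

variable {R : Type*} [CommRing R] [Algebra ℝ R] {d : ℕ}

lemma hasDerivAt_eval_update {𝕜 σ : Type*} [NontriviallyNormedField 𝕜] [DecidableEq σ]
    (v : σ → 𝕜) (k : σ) (P : MvPolynomial σ 𝕜) (t : 𝕜) :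
    HasDerivAt (fun t => eval (Function.update v k t) P)
      (eval (Function.update v k t) (pderiv k P)) t := by
  induction P using MvPolynomial.induction_on with
  | C a => simpa using hasDerivAt_const t a
  | add p q hp hq => simpa using hp.fun_add hq
  | mul_X p i hp =>
    have hX : HasDerivAt (fun t => Function.update v k t i)
        (eval (Function.update v k t) (pderiv k (X i : MvPolynomial σ 𝕜))) t := by
      rcases eq_or_ne i k with rfl | h
      · simpa using hasDerivAt_id' t
      · simpa [pderiv_X_of_ne h, h] using hasDerivAt_const t (v i)
    simpa [add_comm, mul_comm] using hp.fun_mul hX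

lemma integrableOn_simplexSet_eval (P : MvPolynomial (Fin d) ℝ) :
    IntegrableOn (fun u => eval u P) (simplexSet d) :=
  (continuous_eval P).continuousOn.integrableOn_compact (isCompact_simplexSet d)

lemma eval_aeval_dupCoord (e : Fin (d + 2)) (w : Fin d → ℝ) (P : MvPolynomial (Fin (d + 1)) ℝ) :
    eval w (aeval (dupCoord e X) P) = eval (dupCoord e w) P := by
  have hX (i : Fin (d + 2)) : eval w (extCoords X i) = extCoords w i := by
    cases i using Fin.lastCases with
    | last => simp
    | cast i => cases i using Fin.cases <;> simp
  induction P using MvPolynomial.induction_on with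
  | C a => simp [algebraMap_eq]
  | add p q hp hq => simp only [map_add, hp, hq]
  | mul_X p i hp => simp only [map_mul, hp, eval_X, aeval_X, dupCoord, hX]

lemma setIntegral_simplexSet_pderiv (k : Fin (d + 1)) (P : MvPolynomial (Fin (d + 1)) ℝ) :
    ∫ u in simplexSet (d + 1), eval u (pderiv k P) =
      (∫ w in simplexSet d, eval w (aeval (dupCoord k.succ X) P)) -
        ∫ w in simplexSet d, eval w (aeval (dupCoord k.castSucc X) P) := by
  rw [setIntegral_simplexSet_succ k (continuous_eval _),
    ← integral_sub (integrableOn_simplexSet_eval _) (integrableOn_simplexSet_eval _)]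
  refine integral_congr_ae (.of_forall fun w => ?_)
  have hderiv (t : ℝ) : HasDerivAt (fun t => eval (k.insertNth t w : Fin (d + 1) → ℝ) P)
      (eval (k.insertNth t w : Fin (d + 1) → ℝ) (pderiv k P)) t := by
    simpa using hasDerivAt_eval_update (k.insertNth 0 w : Fin (d + 1) → ℝ) k P t
  have hcont : Continuous fun t => eval (k.insertNth t w : Fin (d + 1) → ℝ) (pderiv k P) :=
    (continuous_eval _).comp (Continuous.finInsertNth k continuous_id continuous_const)
  dsimp only
  rw [intervalIntegral.integral_eq_sub_of_hasDerivAt (fun t _ => hderiv t)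
    (hcont.intervalIntegrable _ _), insertNth_extCoords_succ, insertNth_extCoords_castSucc,
    eval_aeval_dupCoord, eval_aeval_dupCoord]

/-- Integration over the simplex `simplexSet d` of polynomials with coefficients in an
`ℝ`-algebra `R`, as the `R`-linear extension of the real integral of monomials. -/
def simplexIntegral (R : Type*) [CommRing R] [Algebra ℝ R] (d : ℕ) :
    MvPolynomial (Fin d) R →ₗ[R] R :=
  (basisMonomials (Fin d) R).constr R
    fun s => algebraMap ℝ R (∫ u in simplexSet d, eval u (monomial s (1 : ℝ)))

lemma simplexIntegral_monomial (s : Fin d →₀ ℕ) (r : R) :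
    simplexIntegral R d (monomial s r) =
      r * algebraMap ℝ R (∫ u in simplexSet d, eval u (monomial s (1 : ℝ))) := by
  have h := (basisMonomials (Fin d) R).constr_basis R
    (fun s => algebraMap ℝ R (∫ u in simplexSet d, eval u (monomial s (1 : ℝ)))) s
  rw [coe_basisMonomials] at h
  rw [← mul_one r, ← smul_eq_mul r 1, ← smul_monomial, map_smul, simplexIntegral, h]
  simp

lemma simplexIntegral_C_mul (r : R) (P : MvPolynomial (Fin d) R) :
    simplexIntegral R d (C r * P) = r * simplexIntegral R d P := by
  rw [← smul_eq_C_mul, map_smul, smul_eq_mul]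

lemma simplexIntegral_map_algebraMap (P : MvPolynomial (Fin d) ℝ) :
    simplexIntegral R d (map (algebraMap ℝ R) P) =
      algebraMap ℝ R (∫ u in simplexSet d, eval u P) := by
  induction P using MvPolynomial.induction_on' with
  | monomial s a =>
    rw [map_monomial, simplexIntegral_monomial, ← map_mul, ← integral_const_mul]
    simp only [eval_monomial, one_mul]
  | add p q hp hq =>
    rw [map_add, map_add, hp, hq, ← map_add,
      ← integral_add (integrableOn_simplexSet_eval p) (integrableOn_simplexSet_eval q)]
    simp only [map_add]

lemma map_simplexIntegral {S : Type*} [CommRing S] [Algebra ℝ S] (f : R →ₐ[ℝ] S)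
    (P : MvPolynomial (Fin d) R) :
    f (simplexIntegral R d P) = simplexIntegral S d (map f P) := by
  induction P using MvPolynomial.induction_on' with
  | monomial s a =>
    rw [map_monomial, simplexIntegral_monomial, simplexIntegral_monomial, map_mul, f.commutes]
    rfl
  | add p q hp hq => rw [map_add, map_add, hp, hq, map_add, map_add]

lemma simplexIntegral_mem {J : Ideal R} {P : MvPolynomial (Fin d) R}
    (hP : P ∈ J.map (C : R →+* MvPolynomial (Fin d) R)) : simplexIntegral R d P ∈ J := by
  rw [mem_map_C_iff] at hP
  rw [P.as_sum, map_sum]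
  refine J.sum_mem fun s _ => ?_
  rw [simplexIntegral_monomial]
  exact J.mul_mem_right _ (hP s)

lemma aeval_map_algebraMap_dupCoord (e : Fin (d + 2)) (P : MvPolynomial (Fin (d + 1)) ℝ) :
    aeval (dupCoord e (X : Fin d → MvPolynomial (Fin d) R)) (map (algebraMap ℝ R) P) =
      map (algebraMap ℝ R) (aeval (dupCoord e X) P) := by
  have hX (i : Fin (d + 2)) : map (algebraMap ℝ R) (extCoords X i) = extCoords X i := by
    cases i using Fin.lastCases with
    | last => simp
    | cast i => cases i using Fin.cases <;> simp
  induction P using MvPolynomial.induction_on with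
  | C a => simp [algebraMap_eq]
  | add p q hp hq => simp only [map_add, hp, hq]
  | mul_X p i hp => simp only [map_mul, hp, map_X, aeval_X, dupCoord, hX]

lemma simplexIntegral_pderiv (k : Fin (d + 1)) (P : MvPolynomial (Fin (d + 1)) R) :
    simplexIntegral R (d + 1) (pderiv k P) =
      simplexIntegral R d (aeval (dupCoord k.succ X) P) -
        simplexIntegral R d (aeval (dupCoord k.castSucc X) P) := by
  induction P using MvPolynomial.induction_on' with
  | monomial s a =>
    have hs : (monomial s a : MvPolynomial (Fin (d + 1)) R) =
        C a * map (algebraMap ℝ R) (monomial s 1) := by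
      rw [map_monomial, map_one, C_mul_monomial, mul_one]
    simp only [hs, pderiv_C_mul, pderiv_map, map_mul, aeval_C, algebraMap_eq,
      simplexIntegral_C_mul, aeval_map_algebraMap_dupCoord, simplexIntegral_map_algebraMap,
      setIntegral_simplexSet_pderiv, map_sub, mul_sub]
  | add p q hp hq => simp only [map_add, hp, hq]; ring

end Stokes

section Faces

variable {d : ℕ}

/-- The map of indices underlying the `e`-th face of the Hochschild differential: it identifies
`e` with its cyclic successor `e + 1`. -/
def faceMap (e : Fin (d + 2)) : Fin (d + 2) → Fin (d + 1) :=
  Fin.lastCases (motive := fun _ => Fin (d + 2) → Fin (d + 1)) (Fin.lastCases 0 id)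
    Fin.predAbove e

@[simp] lemma faceMap_castSucc (e : Fin (d + 1)) : faceMap e.castSucc = e.predAbove := by
  simp [faceMap]

@[simp] lemma faceMap_last_castSucc (i : Fin (d + 1)) :
    faceMap (Fin.last (d + 1)) i.castSucc = i := by
  simp [faceMap]

@[simp] lemma faceMap_last_last : faceMap (Fin.last (d + 1)) (Fin.last (d + 1)) = 0 := by
  simp [faceMap]

@[simp] lemma faceMap_succAbove (e : Fin (d + 2)) (q : Fin (d + 1)) :
    faceMap e (e.succAbove q) = q := by
  cases e using Fin.lastCases <;> simp [Fin.predAbove_succAbove]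

lemma faceMap_add_one (e : Fin (d + 2)) : faceMap e (e + 1) = faceMap e e := by
  cases e using Fin.lastCases with
  | last => rw [Fin.last_add_one, faceMap_last_last, ← Fin.castSucc_zero, faceMap_last_castSucc]
  | cast e => simp

lemma succAbove_faceMap_self (e : Fin (d + 2)) : e.succAbove (faceMap e e) = e + 1 := by
  obtain ⟨q, hq⟩ := Fin.exists_succAbove_eq (x := e + 1) (y := e) (by simp)
  rw [← faceMap_add_one, ← hq, faceMap_succAbove]

/-- The sums of the values of `Y` over the fibres of `σ`. -/
def fiberSum {ι κ V : Type*} [Fintype ι] [DecidableEq κ] [AddCommMonoid V] (σ : ι → κ)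
    (Y : ι → V) (a : κ) : V :=
  ∑ i with σ i = a, Y i

lemma fiberSum_faceMap {V : Type*} [AddCommMonoid V] (e : Fin (d + 2)) (Y : Fin (d + 2) → V)
    (q : Fin (d + 1)) :
    fiberSum (faceMap e) Y q = (if faceMap e e = q then Y e else 0) + Y (e.succAbove q) := by
  rw [fiberSum, Finset.sum_filter, e.sum_univ_succAbove]
  simp

end Faces

section Exponent

variable {R B : Type*} [CommRing R] [CommRing B] [Algebra R B] {m d : ℕ}

/-- The coefficient `2u_i - 2u_j ± 1` of the kernel of `τ`, extended antisymmetrically from the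
pairs `i < j`. -/
def orderWeight (u : Fin m → B) (i j : Fin m) : B :=
  2 * u i - 2 * u j + ((if i < j then 1 else 0) - if j < i then 1 else 0)

/-- The exponent of the kernel of `τ` attached to a matrix `b`, which need not be antisymmetric:
only `b i j - b j i` matters. -/
def exponent (u : Fin m → B) (b : Fin m → Fin m → R) : B :=
  ∑ i, ∑ j, b i j • orderWeight u i j

lemma exponent_eq_sum_pairs (u : Fin m → B) (b : Fin m → Fin m → R) :
    exponent u b =
      ∑ p : Pairs m, (b p.1.1 p.1.2 - b p.1.2 p.1.1) • (2 * u p.1.1 - 2 * u p.1.2 + 1) := by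
  have hlt (i j : Fin m) : b i j • orderWeight u i j =
      (if i < j then b i j • (2 * u i - 2 * u j + 1) else 0) -
        if j < i then b i j • (2 * u j - 2 * u i + 1) else 0 := by
    rcases lt_trichotomy i j with h | rfl | h
    · simp [orderWeight, h, h.not_gt]
    · simp [orderWeight]
    · simp only [orderWeight, h, h.not_gt, if_true, if_false, zero_sub, ← smul_neg]
      ring_nf
  have hswap : (∑ i, ∑ j, if j < i then b i j • (2 * u j - 2 * u i + 1) else 0) =
      ∑ i, ∑ j, if i < j then b j i • (2 * u i - 2 * u j + 1) else 0 :=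
    Finset.sum_comm
  simp only [exponent, hlt, Finset.sum_sub_distrib, hswap]
  simp only [← Finset.sum_sub_distrib, ← Fintype.sum_prod_type', ite_sub_ite, sub_zero,
    ← sub_smul]
  rw [← Finset.sum_filter]
  exact Finset.sum_subtype _ (by simp) _

lemma map_exponent {B' : Type*} [CommRing B'] [Algebra R B'] (f : B →ₐ[R] B') (u : Fin m → B)
    (b : Fin m → Fin m → R) : f (exponent u b) = exponent (f ∘ u) b := by
  simp only [exponent, orderWeight, map_sum, map_smul, map_add, map_sub, map_mul, map_ofNat,
    apply_ite f, map_one, map_zero, Function.comp_apply]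

lemma exponent_fiberSum {V : Type*} [AddCommGroup V] [Module R V] (β : V →ₗ[R] V →ₗ[R] R)
    (σ : Fin m → Fin d) (Y : Fin m → V) (u : Fin d → B) :
    exponent u (fun a b => β (fiberSum σ Y a) (fiberSum σ Y b)) =
      ∑ i, ∑ j, β (Y i) (Y j) • orderWeight u (σ i) (σ j) := by
  have hfib (i : Fin m) : ∑ b, β (Y i) (fiberSum σ Y b) • orderWeight u (σ i) b =
      ∑ j, β (Y i) (Y j) • orderWeight u (σ i) (σ j) := by
    simp only [fiberSum, map_sum, Finset.sum_smul]
    rw [← Finset.sum_fiberwise Finset.univ σ]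
    exact Finset.sum_congr rfl fun b _ => Finset.sum_congr rfl fun j hj => by
      rw [(Finset.mem_filter.1 hj).2]
  simp only [← hfib]
  rw [← Finset.sum_fiberwise Finset.univ σ, exponent]
  refine Finset.sum_congr rfl fun a _ => ?_
  rw [Finset.sum_comm]
  refine Finset.sum_congr rfl fun b _ => ?_
  rw [fiberSum, map_sum, LinearMap.sum_apply, Finset.sum_smul]
  exact Finset.sum_congr rfl fun i hi => by rw [(Finset.mem_filter.1 hi).2]

lemma ite_lt_eq_predAbove_add {S : Type*} [AddMonoidWithOne S] (e : Fin (d + 1))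
    (i j : Fin (d + 2)) :
    (if i < j then 1 else 0 : S) =
      (if e.predAbove i < e.predAbove j then 1 else 0) +
        if i = e.castSucc ∧ j = e.succ then 1 else 0 := by
  have h : i < j ↔ e.predAbove i < e.predAbove j ∨ i = e.castSucc ∧ j = e.succ := by
    simp only [Fin.predAbove, Fin.ext_iff, Fin.lt_def, Fin.val_castSucc, Fin.val_succ]
    split_ifs <;> simp only [Fin.val_pred, Fin.coe_castPred] <;> lia
  have h' : ¬ (e.predAbove i < e.predAbove j ∧ i = e.castSucc ∧ j = e.succ) := by
    rintro ⟨hlt, rfl, rfl⟩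
    simp at hlt
  rw [if_congr h rfl rfl]
  by_cases h₁ : e.predAbove i < e.predAbove j
  · rw [if_pos (Or.inl h₁), if_pos h₁, if_neg fun h₂ => h' ⟨h₁, h₂⟩, add_zero]
  · rw [if_neg h₁, zero_add, if_congr (or_iff_right h₁) rfl rfl]

lemma orderWeight_dupCoord (e i j : Fin (d + 2)) (w : Fin d → B) :
    orderWeight (Fin.cons 0 (dupCoord e w)) i j =
      orderWeight (Fin.cons 0 w : Fin (d + 1) → B) (faceMap e i) (faceMap e j) +
        ((if i = e ∧ j = e + 1 then 1 else 0) - if j = e ∧ i = e + 1 then 1 else 0) := by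
  simp only [orderWeight, cons_zero_dupCoord]
  cases e using Fin.lastCases with
  | cast e =>
    have hU (i : Fin (d + 2)) : extCoords w (e.castSucc.predAbove i.castSucc) =
        (Fin.cons 0 w : Fin (d + 1) → B) (e.predAbove i) := by
      rw [Fin.castSucc_predAbove_castSucc, extCoords_castSucc]
    simp only [hU, faceMap_castSucc, Fin.coeSucc_eq_succ, ite_lt_eq_predAbove_add e i j,
      ite_lt_eq_predAbove_add e j i]
    ring
  | last =>
    have hlast (i : Fin (d + 1)) : i.castSucc ≠ Fin.last (d + 1) := (Fin.castSucc_lt_last i).ne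
    have hpos (i : Fin (d + 1)) :
        (if 0 < i then 1 else 0 : B) = 1 - if i.castSucc = 0 then 1 else 0 := by
      cases i using Fin.cases <;> simp [Fin.succ_ne_zero]
    cases i using Fin.lastCases <;> cases j using Fin.lastCases
    all_goals simp [extCoords_castSucc, hlast, Fin.castSucc_lt_last,
      (Fin.castSucc_lt_last _).not_gt, Fin.last_add_one, hpos]
    all_goals ring

end Exponent

section Cocycle

variable {R : Type*} [CommRing R] {d : ℕ}

/-- The exponent of the kernel of `τ` as a polynomial function on the simplex (with `u_0 = 0`),
when the `i`-th tensor factor has symbol `Y i`. -/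
def kernelExponent {V : Type*} [AddCommGroup V] [Module R V] (β : V →ₗ[R] V →ₗ[R] R)
    (Y : Fin (d + 1) → V) : MvPolynomial (Fin d) R :=
  exponent (Fin.cons 0 X) fun i j => β (Y i) (Y j)

lemma map_cons_zero_X {S : Type*} [CommRing S] (f : R →+* S) (i : Fin (d + 1)) :
    map f ((Fin.cons 0 X : Fin (d + 1) → MvPolynomial (Fin d) R) i) =
      (Fin.cons 0 X : Fin (d + 1) → MvPolynomial (Fin d) S) i := by
  cases i using Fin.cases <;> simp

lemma map_kernelExponent {S V W : Type*} [CommRing S] (f : R →+* S)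
    [AddCommGroup V] [Module R V] [AddCommGroup W] [Module S W]
    {β : V →ₗ[R] V →ₗ[R] R} {γ : W →ₗ[S] W →ₗ[S] S} {Y : Fin (d + 1) → V} {Z : Fin (d + 1) → W}
    (hf : ∀ i j, f (β (Y i) (Y j)) = γ (Z i) (Z j)) :
    map f (kernelExponent β Y) = kernelExponent γ Z := by
  simp only [kernelExponent, exponent, orderWeight, smul_eq_C_mul, map_sum, map_mul, map_C, hf,
    map_add, map_sub, map_ofNat, map_cons_zero_X, apply_ite (map f), map_one, map_zero]

lemma kernelExponent_mem {J : Ideal R} {V : Type*} [AddCommGroup V] [Module R V]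
    {β : V →ₗ[R] V →ₗ[R] R} {Y : Fin (d + 1) → V} (hβ : ∀ i j, β (Y i) (Y j) ∈ J) :
    kernelExponent β Y ∈ J.map (C : R →+* MvPolynomial (Fin d) R) := by
  simp only [kernelExponent, exponent, smul_eq_C_mul]
  exact Ideal.sum_mem _ fun i _ => Ideal.sum_mem _ fun j _ =>
    Ideal.mul_mem_right _ _ (Ideal.mem_map_of_mem _ (hβ i j))

lemma aeval_dupCoord_kernelExponent {V : Type*} [AddCommGroup V] [Module R V]
    (β : V →ₗ[R] V →ₗ[R] R) (Y : Fin (d + 2) → V) (e : Fin (d + 2)) :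
    aeval (dupCoord e X) (kernelExponent β Y) =
      kernelExponent β (fiberSum (faceMap e) Y) +
        C (β (Y e) (Y (e + 1)) - β (Y (e + 1)) (Y e)) := by
  let f : MvPolynomial (Fin (d + 1)) R →ₐ[R] MvPolynomial (Fin d) R := aeval (dupCoord e X)
  have hcons : f ∘ (Fin.cons 0 X : Fin (d + 2) → MvPolynomial (Fin (d + 1)) R) =
      Fin.cons 0 (dupCoord e X) := by
    ext1 i
    cases i using Fin.cases <;> simp [f]
  have hpair (a b : Fin (d + 2)) :
      ∑ i, ∑ j, β (Y i) (Y j) • (if i = a ∧ j = b then 1 else 0 : MvPolynomial (Fin d) R) =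
        C (β (Y a) (Y b)) := by
    rw [Finset.sum_eq_single_of_mem a (Finset.mem_univ a) fun i _ hi => by simp [hi],
      Finset.sum_eq_single_of_mem b (Finset.mem_univ b) fun j _ hj => by simp [hj]]
    simp [smul_eq_C_mul]
  have hmap : f (kernelExponent β Y) =
      exponent (Fin.cons 0 (dupCoord e X)) fun i j => β (Y i) (Y j) :=
    (map_exponent f _ _).trans (by rw [hcons])
  rw [hmap, kernelExponent, exponent_fiberSum, map_sub, ← hpair, ← hpair (e + 1) e]
  simp only [exponent, orderWeight_dupCoord, smul_add, smul_sub, Finset.sum_add_distrib,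
    Finset.sum_sub_distrib, and_comm]

lemma pderiv_kernelExponent {V : Type*} [AddCommGroup V] [Module R V]
    (β : V →ₗ[R] V →ₗ[R] R) (Y : Fin (d + 1) → V) (k : Fin d) :
    pderiv k (kernelExponent β Y) =
      C (2 * (β (Y k.succ) (∑ j, Y j) - β (∑ i, Y i) (Y k.succ))) := by
  have hcons (i : Fin (d + 1)) :
      pderiv k ((Fin.cons 0 X : Fin (d + 1) → MvPolynomial (Fin d) R) i) =
        if i = k.succ then 1 else 0 := by
    cases i using Fin.cases with
    | zero => simp [(Fin.succ_ne_zero k).symm]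
    | succ i => simp [pderiv_X, Pi.single_apply]
  have hweight (i j : Fin (d + 1)) :
      pderiv k (orderWeight (Fin.cons 0 X : Fin (d + 1) → MvPolynomial (Fin d) R) i j) =
        C ((if i = k.succ then 2 else 0) - if j = k.succ then 2 else 0) := by
    have hconst : pderiv k ((if i < j then 1 else 0) - if j < i then 1 else 0 :
        MvPolynomial (Fin d) R) = 0 := by
      split_ifs <;> simp
    rw [orderWeight, map_add, hconst, map_sub, two_mul, two_mul, map_add, map_add, hcons, hcons]
    split_ifs <;> simp [one_add_one_eq_two, map_ofNat C 2]
  simp only [kernelExponent, exponent, map_sum, Derivation.map_smul, hweight]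
  simp only [smul_eq_C_mul, ← C_mul, ← map_sum C, mul_sub, Finset.sum_sub_distrib, mul_ite,
    mul_zero]
  congr 2
  · rw [Finset.sum_eq_single_of_mem k.succ (Finset.mem_univ _) fun i _ hi => by simp [hi]]
    simp [Finset.mul_sum, mul_comm]
  · simp [Finset.mul_sum, mul_comm]

lemma sum_neg_one_pow_mul_det_succAbove (T : Fin (d + 1) → Fin d → R) (φ : (Fin d → R) →ₗ[R] R) :
    ∑ k : Fin (d + 1), (-1) ^ k.1 * φ (T k) * (Matrix.of (T ∘ k.succAbove)).det = 0 := by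
  have hcol (j : Fin d) :
      ∑ k : Fin (d + 1), (-1) ^ k.1 * T k j * (Matrix.of (T ∘ k.succAbove)).det = 0 := by
    -- Laplace expansion of a determinant whose first column repeats column `j + 1`.
    let A : Matrix (Fin (d + 1)) (Fin (d + 1)) R :=
      Matrix.of fun k => Fin.cons (T k j) (T k)
    rw [← Matrix.det_zero_of_column_eq (M := A) (Fin.succ_ne_zero j) fun k => by simp [A],
      Matrix.det_succ_column_zero]
    rfl
  have hφ (v : Fin d → R) : φ v = ∑ j, v j * φ (Pi.single j 1) := by
    simpa only [map_sum, map_smul, smul_eq_mul] using congrArg φ (pi_eq_sum_univ' v)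
  calc _ = ∑ k : Fin (d + 1), ∑ j : Fin d,
          (-1) ^ k.1 * T k j * (Matrix.of (T ∘ k.succAbove)).det * φ (Pi.single j 1) := by
        refine Finset.sum_congr rfl fun k _ => ?_
        rw [hφ, Finset.mul_sum, Finset.sum_mul]
        exact Finset.sum_congr rfl fun j _ => by ring
    _ = 0 := by
        simp only [Finset.sum_comm (γ := Fin (d + 1)), ← Finset.sum_mul, hcol, zero_mul,
          Finset.sum_const_zero]

lemma comp_succ_succAbove {α : Type*} (k : Fin d) (T : Fin (d + 1) → α) :
    T ∘ k.succ.succAbove = Function.update (T ∘ k.castSucc.succAbove) k (T k.castSucc) := by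
  ext1 m
  rcases eq_or_ne m k with rfl | hm
  · simp
  · have hskip : k.succ.succAbove m = k.castSucc.succAbove m := by
      simp only [Fin.ext_iff, Fin.succAbove, Fin.lt_def, Fin.val_castSucc, Fin.val_succ] at hm ⊢
      split_ifs <;> simp only [Fin.val_castSucc, Fin.val_succ] <;> lia
    simp [hm, hskip]

lemma det_fiberSum_faceMap_succ (k : Fin d) (Y : Fin (d + 2) → Fin d → R) :
    (Matrix.of (fiberSum (faceMap k.castSucc.succ) Y ∘ Fin.succ)).det =
      (Matrix.of ((Y ∘ Fin.succ) ∘ k.castSucc.succAbove)).det +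
        (Matrix.of ((Y ∘ Fin.succ) ∘ k.succ.succAbove)).det := by
  set T := Y ∘ Fin.succ with hT
  have hface : faceMap k.castSucc.succ k.castSucc.succ = k.succ := by
    rw [Fin.succ_castSucc, faceMap_castSucc, Fin.predAbove_castSucc_self]
  have hsum : fiberSum (faceMap k.castSucc.succ) Y ∘ Fin.succ =
      Function.update (T ∘ k.castSucc.succAbove) k (T k.succ + T k.castSucc) := by
    ext1 m
    rcases eq_or_ne m k with rfl | hm
    · simp [fiberSum_faceMap, hface, hT, add_comm]
    · simp [fiberSum_faceMap, hface, hT, hm, hm.symm]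
  have hself :
      T ∘ k.castSucc.succAbove = Function.update (T ∘ k.castSucc.succAbove) k (T k.succ) := by
    simp
  rw [hsum, comp_succ_succAbove]
  nth_rw 2 [hself]
  exact Matrix.det_updateRow_add ..

lemma det_fiberSum_faceMap (e : Fin (d + 2)) (Y : Fin (d + 2) → Fin d → R) :
    (Matrix.of (fiberSum (faceMap e) Y ∘ Fin.succ)).det =
      (Fin.cons 0 fun k => (Matrix.of ((Y ∘ Fin.succ) ∘ k.succAbove)).det : Fin (d + 2) → R) e +
        Fin.snoc (α := fun _ => R)
          (fun k => (Matrix.of ((Y ∘ Fin.succ) ∘ k.succAbove)).det) 0 e := by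
  cases e using Fin.lastCases with
  | last =>
    rw [← Fin.succ_last, Fin.cons_succ, Fin.succ_last, Fin.snoc_last, add_zero]
    congr 2
    ext1 m
    simp [fiberSum_faceMap, (Fin.succ_ne_zero m).symm]
  | cast e =>
    rw [Fin.snoc_castSucc]
    cases e using Fin.cases with
    | zero =>
      have hface : faceMap (0 : Fin (d + 2)) 0 = 0 := by
        rw [← Fin.castSucc_zero, faceMap_castSucc, Fin.predAbove_castSucc_self]
      rw [Fin.castSucc_zero, Fin.cons_zero, zero_add]
      congr 2
      ext1 m
      simp [fiberSum_faceMap, hface, (Fin.succ_ne_zero m).symm]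
    | succ k =>
      rw [← Fin.succ_castSucc, Fin.cons_succ]
      exact det_fiberSum_faceMap_succ k Y

/-- The symbol of the Hochschild cochain attached to the weight `g` (for `τ`, a Taylor polynomial
of the exponential), as a function of the symbols `Y i` of the tensor factors; `c` is a constant
shift of the exponent. -/
def cochainSymbol [Algebra ℝ R] (g : Polynomial R) (β : (Fin d → R) →ₗ[R] (Fin d → R) →ₗ[R] R)
    (c : R) (Y : Fin (d + 1) → Fin d → R) : R :=
  simplexIntegral R d
      (Polynomial.aeval (kernelExponent β Y + C c) g) *
    (Matrix.of (Y ∘ Fin.succ)).det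

lemma map_cochainSymbol {S : Type*} [CommRing S] [Algebra ℝ R] [Algebra ℝ S]
    (f : R →ₐ[ℝ] S) (g : Polynomial R) {β : (Fin d → R) →ₗ[R] (Fin d → R) →ₗ[R] R}
    {γ : (Fin d → S) →ₗ[S] (Fin d → S) →ₗ[S] S} (hf : ∀ x y, f (β x y) = γ (f ∘ x) (f ∘ y))
    (c : R) (Y : Fin (d + 1) → Fin d → R) :
    f (cochainSymbol g β c Y) =
      cochainSymbol (g.map f.toRingHom) γ (f c) fun i => f ∘ Y i := by
  have hQ : map f.toRingHom (kernelExponent β Y + C c) =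
      kernelExponent γ (fun i => f ∘ Y i) + C (f c) := by
    rw [map_add, map_C, map_kernelExponent f.toRingHom fun i j => hf (Y i) (Y j)]
    rfl
  have hC : (algebraMap S (MvPolynomial (Fin d) S)).comp f.toRingHom =
      (map f.toRingHom).comp (algebraMap R (MvPolynomial (Fin d) R)) :=
    RingHom.ext fun r => (map_C _ r).symm
  rw [cochainSymbol, cochainSymbol, map_mul, map_simplexIntegral, AlgHom.map_det, ← hQ]
  exact congrArg₂ (simplexIntegral S d · * ·) (Polynomial.map_aeval_eq_aeval_map hC g _) rfl

lemma cochainSymbol_truncExp_sub_mem [Algebra ℚ R] [Algebra ℝ R]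
    {J : Ideal R} {β : (Fin d → R) →ₗ[R] (Fin d → R) →ₗ[R] R} {c : R} {Y : Fin (d + 1) → Fin d → R}
    (M : ℕ) (hβ : ∀ i j, β (Y i) (Y j) ∈ J) (hc : c ∈ J) :
    cochainSymbol ((truncExp M).map (algebraMap ℚ R)) β c Y -
      cochainSymbol ((truncExp M).map (algebraMap ℚ R)) β 0 Y * Polynomial.aeval c (truncExp M) ∈
        J ^ (M + 1) := by
  simp only [cochainSymbol, Polynomial.aeval_map_algebraMap, map_zero, add_zero]
  rw [mul_right_comm, ← sub_mul, mul_comm _ (Polynomial.aeval c _), ← simplexIntegral_C_mul,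
    ← map_sub, map_aeval_truncExp, mul_comm (Polynomial.aeval (C c) _)]
  refine Ideal.mul_mem_right _ _ (simplexIntegral_mem ?_)
  rw [Ideal.map_pow]
  exact aeval_truncExp_add_sub_mem le_rfl (kernelExponent_mem hβ) (Ideal.mem_map_of_mem C hc)

lemma sum_neg_one_pow_mul_cons_add_snoc (I : Fin (d + 1) → R) (D : Fin d → R) :
    ∑ e : Fin (d + 1), (-1) ^ e.1 *
        (I e * ((Fin.cons 0 D : Fin (d + 1) → R) e + Fin.snoc (α := fun _ => R) D 0 e)) =
      -∑ k : Fin d, (-1) ^ k.1 * (I k.succ - I k.castSucc) * D k := by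
  simp only [mul_add, Finset.sum_add_distrib]
  rw [Fin.sum_univ_succ, Fin.sum_univ_castSucc (n := d), Fin.cons_zero, Fin.snoc_last]
  simp only [Fin.cons_succ, Fin.snoc_castSucc, Fin.val_succ, Fin.val_castSucc, mul_zero, zero_add,
    add_zero, ← Finset.sum_add_distrib, ← Finset.sum_neg_distrib]
  exact Finset.sum_congr rfl fun k _ => by ring

theorem sum_neg_one_pow_mul_cochainSymbol [Algebra ℝ R] (g : Polynomial R)
    (β : (Fin d → R) →ₗ[R] (Fin d → R) →ₗ[R] R) (Y : Fin (d + 2) → Fin d → R) :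
    ∑ e : Fin (d + 2), (-1) ^ e.1 *
      cochainSymbol g β (β (Y e) (Y (e + 1)) - β (Y (e + 1)) (Y e)) (fiberSum (faceMap e) Y) =
        0 := by
  set T := Y ∘ Fin.succ with hT
  set D : Fin (d + 1) → R := fun k => (Matrix.of (T ∘ k.succAbove)).det
  set I : Fin (d + 2) → R := fun e =>
    simplexIntegral R d (aeval (dupCoord e X) (Polynomial.aeval (kernelExponent β Y) g))
  set I' : R := simplexIntegral R (d + 1)
    (Polynomial.aeval (kernelExponent β Y) (Polynomial.derivative g))
  set φ : (Fin d → R) →ₗ[R] R := 2 • (β.flip (∑ j, Y j) - β (∑ j, Y j)) with hφ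
  have hface (e : Fin (d + 2)) : cochainSymbol g β (β (Y e) (Y (e + 1)) - β (Y (e + 1)) (Y e))
      (fiberSum (faceMap e) Y) =
        I e * ((Fin.cons 0 D : Fin (d + 2) → R) e + Fin.snoc (α := fun _ => R) D 0 e) := by
    rw [cochainSymbol, ← aeval_dupCoord_kernelExponent, Polynomial.aeval_algHom_apply,
      det_fiberSum_faceMap]
  have hstokes (k : Fin (d + 1)) : I k.succ - I k.castSucc = φ (T k) * I' := by
    rw [← simplexIntegral_pderiv, Derivation.map_aeval, pderiv_kernelExponent, smul_eq_mul,
      mul_comm, simplexIntegral_C_mul]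
    simp [hφ, hT, two_mul, I']
  calc _ = ∑ e : Fin (d + 2), (-1) ^ e.1 *
          (I e * ((Fin.cons 0 D : Fin (d + 2) → R) e + Fin.snoc (α := fun _ => R) D 0 e)) := by
        simp only [hface]
    _ = -∑ k : Fin (d + 1), (-1) ^ k.1 * (I k.succ - I k.castSucc) * D k :=
        sum_neg_one_pow_mul_cons_add_snoc I D
    _ = -((∑ k : Fin (d + 1), (-1) ^ k.1 * φ (T k) * D k) * I') := by
        rw [Finset.sum_mul]
        exact congrArg _ (Finset.sum_congr rfl fun k _ => by rw [hstokes]; ring)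
    _ = 0 := by rw [sum_neg_one_pow_mul_det_succAbove, zero_mul, neg_zero]

end Cocycle

section TauSymbol

variable {n k : ℕ}

/-- The bilinear form `(ε/2) ∑_r x_{p_r} y_{q_r}`; its antisymmetrization is the symbol of `εα`. -/
def moyalForm (n : ℕ) (R : Type*) [CommRing R] [Algebra Kc R] :
    (Fin (2 * n) → R) →ₗ[R] (Fin (2 * n) → R) →ₗ[R] R :=
  algebraMap Kc R (algebraMap ℂ Kc (1 / 2) * eps) • ∑ r : Fin n,
    (LinearMap.mul R R).compl₁₂ (LinearMap.proj (pVar n r)) (LinearMap.proj (qVar n r))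

/-- The symbols of the partial derivatives in the `i`-th tensor factor. -/
def factorSymbol (n k : ℕ) (i : Fin k) : Fin (2 * n) → Tens n k := fun v => X (i, v)

/-- The symbol of `εα_{ij}`. -/
def moyalSymbol (n k : ℕ) (i j : Fin k) : Tens n k :=
  moyalForm n _ (factorSymbol n k i) (factorSymbol n k j) -
    moyalForm n _ (factorSymbol n k j) (factorSymbol n k i)

lemma moyalSymbol_eq (i j : Fin k) :
    moyalSymbol n k i j = C (algebraMap ℂ Kc (1 / 2) * eps) *
      ∑ r, (X (i, pVar n r) * X (j, qVar n r) - X (i, qVar n r) * X (j, pVar n r)) := by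
  simp only [moyalSymbol, moyalForm, factorSymbol, algebraMap_eq, LinearMap.smul_apply,
    LinearMap.sum_apply, LinearMap.compl₁₂_apply, LinearMap.mul_apply', LinearMap.proj_apply,
    smul_eq_mul, ← mul_sub, ← Finset.sum_sub_distrib, mul_comm (X (j, _))]

lemma moyalSymbol_mem_idealOfVars (i j : Fin k) :
    moyalSymbol n k i j ∈ idealOfVars (Fin k × Fin (2 * n)) Kc := by
  have hX (v : Fin k × Fin (2 * n)) : (X v : Tens n k) ∈ idealOfVars _ Kc :=
    Ideal.subset_span ⟨v, rfl⟩
  rw [moyalSymbol_eq]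
  exact Ideal.mul_mem_left _ _ (Ideal.sum_mem _ fun r _ =>
    sub_mem (Ideal.mul_mem_left _ _ (hX _)) (Ideal.mul_mem_left _ _ (hX _)))

lemma eps_smul_alphaOp (i j : Fin k) : eps • alphaOp n k i j = diffOp (moyalSymbol n k i j) := by
  have hC (c : Kc) : diffOp (C c : Tens n k) = algebraMap Kc (Module.End Kc (Tens n k)) c := by
    rw [← algebraMap_eq, AlgHom.commutes]
  rw [moyalSymbol_eq, map_mul, hC, ← Algebra.smul_def, mul_comm _ eps, mul_smul, alphaOp]
  simp only [map_sum, map_sub, map_mul, diffOp_X, Dop]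

lemma eps_pow_smul_alphaPowProd (K : Pairs k → ℕ) :
    eps ^ (∑ p, K p) • alphaPowProd n k K =
      diffOp (∏ p : Pairs k, moyalSymbol n k p.1.1 p.1.2 ^ K p) := by
  have hlist (l : List (Pairs k)) :
      eps ^ (l.map K).sum • (l.map fun p => alphaOp n k p.1.1 p.1.2 ^ K p).prod =
        diffOp (l.map fun p => moyalSymbol n k p.1.1 p.1.2 ^ K p).prod := by
    induction l with
    | nil => simp
    | cons p l ih =>
      simp only [List.map_cons, List.sum_cons, List.prod_cons, map_mul, map_pow, ← ih,
        ← eps_smul_alphaOp, smul_pow, pow_add, smul_mul_smul_comm]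
  simpa [alphaPowProd] using hlist Finset.univ.toList

lemma piOp_eq_diffOp :
    piOp n = diffOp (Matrix.of (factorSymbol n (2 * n + 1) ∘ Fin.succ)).det := by
  rw [← Matrix.det_transpose, Matrix.det_apply, map_sum, piOp]
  refine Finset.sum_congr rfl fun σ _ => ?_
  rw [Units.smul_def, map_zsmul]
  congr 1
  rw [← List.prod_ofFn, map_list_prod, List.map_ofFn]
  congr 2 with m
  simp [factorSymbol, Dop, diffOp_X]

/-- The polynomial `2u_i - 2u_j + 1` on the simplex, with `u_0 = 0`, for a pair `i < j`. -/
def pairWeight (R : Type*) [CommRing R] {d : ℕ} (p : Pairs (d + 1)) : MvPolynomial (Fin d) R :=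
  2 * (Fin.cons 0 X : Fin (d + 1) → _) p.1.1 - 2 * (Fin.cons 0 X : Fin (d + 1) → _) p.1.2 + 1

lemma map_pairWeight {R S : Type*} [CommRing R] [CommRing S] (f : R →+* S) {d : ℕ}
    (p : Pairs (d + 1)) : map f (pairWeight R p) = pairWeight S p := by
  simp [pairWeight, map_cons_zero_X]

lemma eval_pairWeight {d : ℕ} (u : Fin d → ℝ) (p : Pairs (d + 1)) :
    eval u (pairWeight ℝ p) = 2 * cons0 d u p.1.1 - 2 * cons0 d u p.1.2 + 1 := by
  have hcons (i : Fin (d + 1)) : eval u ((Fin.cons 0 X : Fin (d + 1) → _) i) = cons0 d u i := by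
    cases i using Fin.cases <;> simp [cons0]
  simp [pairWeight, hcons]

lemma simplexIntegral_prod_pairWeight {R : Type*} [CommRing R] [Algebra ℝ R] {d : ℕ}
    (s : Pairs (d + 1) → R) (K : Pairs (d + 1) → ℕ) :
    simplexIntegral R d (∏ p, (C (s p) * pairWeight R p) ^ K p) =
      (∏ p, s p ^ K p) * algebraMap ℝ R (∫ u in simplexSet d,
        ∏ p : Pairs (d + 1), (2 * cons0 d u p.1.1 - 2 * cons0 d u p.1.2 + 1) ^ K p) := by
  have hW := simplexIntegral_map_algebraMap (R := R)
    (∏ p, pairWeight ℝ p ^ K p : MvPolynomial (Fin d) ℝ)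
  simp only [map_prod, map_pow, map_pairWeight, eval_pairWeight] at hW
  simp only [mul_pow, Finset.prod_mul_distrib, ← C_pow, ← map_prod C, simplexIntegral_C_mul, hW]

lemma kernelExponent_moyalForm :
    kernelExponent (moyalForm n (Tens n (k + 1))) (factorSymbol n (k + 1)) =
      ∑ p : Pairs (k + 1), C (moyalSymbol n (k + 1) p.1.1 p.1.2) * pairWeight _ p := by
  simp only [kernelExponent, exponent_eq_sum_pairs, smul_eq_C_mul, moyalSymbol, pairWeight]

lemma tau_eq_symbolPairing_prod (a : Tens n (2 * n + 1)) :
    tau n a = symbolPairing a (simplexIntegral _ (2 * n) (∏ p : Pairs (2 * n + 1),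
      Polynomial.aeval (C (moyalSymbol n (2 * n + 1) p.1.1 p.1.2) * pairWeight _ p)
        (truncExp a.totalDegree)) *
      (Matrix.of (factorSymbol n (2 * n + 1) ∘ Fin.succ)).det) := by
  have hscalar (q : ℚ) (x : ℝ) (y : Kc) :
      (algebraMap ℂ Kc (x * q)) * y = q • (algebraMap ℝ Kc x * y) := by
    have hq : algebraMap ℂ Kc q = algebraMap ℚ Kc q :=
      ((IsScalarTower.algebraMap_apply ℚ ℂ Kc q).trans (by rw [eq_ratCast])).symm
    rw [map_mul, hq, Algebra.smul_def, mul_left_comm, mul_assoc]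
    rfl
  simp only [aeval_truncExp, Finset.prod_univ_sum, Finset.prod_smul, map_sum, Finset.sum_mul,
    map_rat_smul, smul_mul_assoc, simplexIntegral_prod_pairWeight]
  refine Finset.sum_congr rfl fun K _ => ?_
  have hfac : (∏ p, ((K p).factorial : ℂ))⁻¹ = ((∏ p, ((K p).factorial : ℚ)⁻¹ : ℚ) : ℂ) := by
    push_cast
    rw [Finset.prod_inv_distrib]
  have hreal (x : ℝ) : algebraMap ℝ (Tens n (2 * n + 1)) x = C (algebraMap ℝ Kc x) := rfl
  rw [hfac, smul_eq_mul, mul_assoc, hscalar, ← smul_eq_mul (eps ^ _), ← constantCoeff_smul,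
    ← LinearMap.smul_apply, eps_pow_smul_alphaPowProd, piOp_eq_diffOp, ← diffOp_mul, hreal,
    mul_comm _ (C _), mul_assoc, ← smul_eq_C_mul, map_smul, smul_eq_mul]
  rfl

lemma tau_eq_symbolPairing (a : Tens n (2 * n + 1)) {M : ℕ} (hM : a.totalDegree ≤ M) :
    tau n a = symbolPairing a (cochainSymbol ((truncExp M).map (algebraMap ℚ _)) (moyalForm n _) 0
      (factorSymbol n (2 * n + 1))) := by
  rw [tau_eq_symbolPairing_prod, cochainSymbol, map_zero, add_zero, Polynomial.aeval_map_algebraMap,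
    kernelExponent_moyalForm]
  refine symbolPairing_congr (m := a.totalDegree + 1) ?_ (Nat.lt_succ_self _)
  rw [← sub_mul, ← map_sub]
  refine Ideal.mul_mem_right _ _ (simplexIntegral_mem ?_)
  rw [Ideal.map_pow]
  exact prod_aeval_truncExp_sub_mem hM fun p => Ideal.mul_mem_right _ _
    (Ideal.mem_map_of_mem _ (moyalSymbol_mem_idealOfVars _ _))

end TauSymbol

section MoyalFaces

variable {n k : ℕ}

lemma map_moyalForm {R S : Type*} [CommRing R] [CommRing S] [Algebra Kc R] [Algebra Kc S]
    (f : R →ₐ[Kc] S) (x y : Fin (2 * n) → R) :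
    f (moyalForm n R x y) = moyalForm n S (f ∘ x) (f ∘ y) := by
  simp only [moyalForm, LinearMap.smul_apply, LinearMap.sum_apply, LinearMap.compl₁₂_apply,
    LinearMap.mul_apply', LinearMap.proj_apply, smul_eq_mul, map_mul, map_sum, f.commutes,
    Function.comp_apply]

lemma moyalForm_mem {R : Type*} [CommRing R] [Algebra Kc R] {J : Ideal R} {x : Fin (2 * n) → R}
    (hx : ∀ v, x v ∈ J) (y : Fin (2 * n) → R) : moyalForm n R x y ∈ J := by
  simp only [moyalForm, LinearMap.smul_apply, LinearMap.sum_apply, LinearMap.compl₁₂_apply,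
    LinearMap.mul_apply', LinearMap.proj_apply, smul_eq_mul]
  exact J.mul_mem_left _ (J.sum_mem fun r _ => J.mul_mem_right _ (hx _))

/-- The algebra map induced by a map of tensor factors; it multiplies the factors in each fibre. -/
def mergeFactors {l : ℕ} (σ : Fin l → Fin k) : Tens n l →ₐ[Kc] Tens n k := rename (Prod.map σ id)

lemma mergeFactors_embA {l : ℕ} (σ : Fin l → Fin k) (i : Fin l) (f : Apol n) :
    mergeFactors σ (embA n l i f) = embA n k (σ i) f :=
  rename_rename ..

lemma mergeFactors_comp {l m : ℕ} (σ : Fin l → Fin k) (ι : Fin m → Fin l) (h : Tens n m) :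
    mergeFactors σ (mergeFactors ι h) = mergeFactors (σ ∘ ι) h := by
  rw [mergeFactors, mergeFactors, rename_rename, Prod.map_comp_map]
  rfl

lemma mergeFactors_const {l : ℕ} (i : Fin k) (h : Tens n l) :
    mergeFactors (fun _ => i) h = embA n k i (rename Prod.snd h) :=
  (rename_rename ..).symm

lemma mergeFactors_moyalSymbol {l : ℕ} (ι : Fin l → Fin k) (i j : Fin l) :
    mergeFactors ι (moyalSymbol n l i j) = moyalSymbol n k (ι i) (ι j) := by
  have h (i : Fin l) : mergeFactors ι ∘ factorSymbol n l i = factorSymbol n k (ι i) :=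
    funext fun v => rename_X ..
  simp only [moyalSymbol, map_sub, map_moyalForm, h]

lemma expEps_alphaOp (i j : Fin k) (b : Tens n k) {M : ℕ} (hM : b.totalDegree ≤ M) :
    expEps (alphaOp n k i j) b =
      diffOp (Polynomial.aeval (moyalSymbol n k i j) (truncExp M)) b := by
  have hN : expEps (alphaOp n k i j) b =
      diffOp (Polynomial.aeval (moyalSymbol n k i j) (truncExp b.totalDegree)) b := by
    rw [expEps, aeval_truncExp, map_sum, LinearMap.sum_apply]
    refine Finset.sum_congr rfl fun m _ => ?_
    have hq : algebraMap ℂ Kc (m.factorial : ℂ)⁻¹ = algebraMap ℚ Kc (m.factorial : ℚ)⁻¹ :=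
      ((IsScalarTower.algebraMap_apply ℚ ℂ Kc _).trans (by simp)).symm
    rw [map_rat_smul, map_pow, ← eps_smul_alphaOp, smul_pow, hq, mul_smul, algebraMap_smul]
    rfl
  rw [hN]
  refine diffOp_congr (m := b.totalDegree + 1) ?_ (Nat.lt_succ_self _)
  rw [← Ideal.Quotient.eq, mk_aeval_truncExp hM (moyalSymbol_mem_idealOfVars i j),
    mk_aeval_truncExp le_rfl (moyalSymbol_mem_idealOfVars i j)]

lemma moyal_eq (f g : Apol n) {M : ℕ} (hM : (elemT ![f, g]).totalDegree ≤ M) :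
    moyal n f g = rename Prod.snd
      (diffOp (Polynomial.aeval (moyalSymbol n 2 0 1) (truncExp M)) (elemT ![f, g])) := by
  rw [moyal, expEps_alphaOp _ _ _ hM, rename_eq_aeval]
  rfl

lemma pderiv_embA_of_ne {i j : Fin k} (hij : i ≠ j) (v : Fin (2 * n)) (f : Apol n) :
    pderiv (i, v) (embA n k j f) = 0 := by
  classical
  refine pderiv_eq_zero_of_notMem_vars fun hv => ?_
  obtain ⟨w, -, hw⟩ := Finset.mem_image.1 (vars_rename (fun v => (j, v)) f hv)
  exact hij (congrArg Prod.fst hw).symm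

lemma pderiv_prod_eq_zero {ι σ R : Type*} [CommRing R] {s : Finset ι} {f : ι → MvPolynomial σ R}
    {i : σ} (hf : ∀ j ∈ s, pderiv i (f j) = 0) : pderiv i (∏ j ∈ s, f j) = 0 :=
  Finset.prod_induction f (pderiv i · = 0) (fun p q hp hq => by simp [hp, hq])
    pderiv_one hf

/-- The tuple underlying the `e`-th face of the Hochschild differential: `a_e` and its cyclic
successor `a_{e+1}` are replaced by `a_e ⋆ a_{e+1}`. -/
def moyalFace {d : ℕ} (e : Fin (d + 2)) (a : Fin (d + 2) → Apol n) : Fin (d + 1) → Apol n :=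
  Function.update (a ∘ e.succAbove) (faceMap e e) (moyal n (a e) (a (e + 1)))

lemma elemT_eq_mergeFactors_mul {d : ℕ} (e : Fin (d + 2)) (a : Fin (d + 2) → Apol n) :
    elemT a = mergeFactors ![e, e + 1] (elemT ![a e, a (e + 1)]) *
      ∏ j ∈ Finset.univ.erase (faceMap e e),
        embA n (d + 2) (e.succAbove j) (a (e.succAbove j)) := by
  rw [elemT, elemT, e.prod_univ_succAbove,
    ← Finset.mul_prod_erase _ _ (Finset.mem_univ (faceMap e e)), Fin.prod_univ_two, map_mul,
    mergeFactors_embA, mergeFactors_embA, mul_assoc, succAbove_faceMap_self]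
  rfl

lemma diffOp_mergeFactors_elemT {d : ℕ} (e : Fin (d + 2)) (a : Fin (d + 2) → Apol n)
    (P : Tens n 2) :
    diffOp (mergeFactors ![e, e + 1] P) (elemT a) =
      mergeFactors ![e, e + 1] (diffOp P (elemT ![a e, a (e + 1)])) *
        ∏ j ∈ Finset.univ.erase (faceMap e e),
          embA n (d + 2) (e.succAbove j) (a (e.succAbove j)) := by
  have hinj : Function.Injective (Prod.map ![e, e + 1] (id : Fin (2 * n) → _)) := by
    refine Function.Injective.prodMap (fun s t => ?_) Function.injective_id
    fin_cases s <;> fin_cases t <;> simp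
  rw [elemT_eq_mergeFactors_mul e a]
  refine diffOp_rename_mul hinj (fun s => ?_) P _
  refine pderiv_prod_eq_zero fun j hj => pderiv_embA_of_ne ?_ ..
  obtain ⟨s, v⟩ := s
  fin_cases s
  · exact (e.succAbove_ne j).symm
  · have := Finset.ne_of_mem_erase hj
    simpa [← succAbove_faceMap_self, eq_comm] using this

lemma elemT_moyalFace {d : ℕ} (e : Fin (d + 2)) (a : Fin (d + 2) → Apol n) {M : ℕ}
    (hM : (elemT ![a e, a (e + 1)]).totalDegree ≤ M) :
    elemT (moyalFace e a) = mergeFactors (faceMap e) (diffOp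
      (Polynomial.aeval (moyalSymbol n (d + 2) e (e + 1)) (truncExp M)) (elemT a)) := by
  have hsymbol : Polynomial.aeval (moyalSymbol n (d + 2) e (e + 1)) (truncExp M) =
      mergeFactors ![e, e + 1] (Polynomial.aeval (moyalSymbol n 2 0 1) (truncExp M)) := by
    rw [map_aeval_truncExp, mergeFactors_moyalSymbol]
    rfl
  have hconst : faceMap e ∘ ![e, e + 1] = fun _ => faceMap e e := by
    funext s
    fin_cases s <;> simp [faceMap_add_one]
  rw [hsymbol, diffOp_mergeFactors_elemT, map_mul, mergeFactors_comp, hconst, mergeFactors_const,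
    ← moyal_eq _ _ hM, map_prod, elemT,
    ← Finset.mul_prod_erase _ _ (Finset.mem_univ (faceMap e e))]
  refine congrArg₂ (· * ·) ?_ (Finset.prod_congr rfl fun j hj => ?_)
  · rw [moyalFace, Function.update_self]
  · rw [moyalFace, Function.update_of_ne (Finset.ne_of_mem_erase hj), Function.comp_apply,
      mergeFactors_embA, faceMap_succAbove]

lemma symbolPullback_factorSymbol {l : ℕ} (σ : Fin l → Fin k) (i : Fin k) :
    symbolPullback (Prod.map σ id) ∘ factorSymbol n k i = fiberSum σ (factorSymbol n l) i := by
  classical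
  ext1 v
  rw [Function.comp_apply, factorSymbol, symbolPullback, aeval_X, fiberSum, Finset.sum_apply]
  exact (Finset.sum_nbij (fun j => (j, v)) (by simp) (by simp) (by
    rintro ⟨j, w⟩ h
    simp_all) fun _ _ => rfl).symm

lemma tau_elemT_moyalFace (e : Fin (2 * n + 2)) (a : Fin (2 * n + 2) → Apol n) :
    ∀ᶠ M in Filter.atTop, tau n (elemT (moyalFace e a)) =
      symbolPairing (elemT a) (cochainSymbol ((truncExp M).map (algebraMap ℚ _)) (moyalForm n _)
        (moyalSymbol n (2 * n + 2) e (e + 1))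
        (fiberSum (faceMap e) (factorSymbol n (2 * n + 2)))) := by
  filter_upwards [Filter.eventually_ge_atTop (elemT ![a e, a (e + 1)]).totalDegree,
    Filter.eventually_ge_atTop (elemT (moyalFace e a)).totalDegree,
    Filter.eventually_ge_atTop (elemT a).totalDegree] with M hM hface ha
  have hmem (i v) : fiberSum (faceMap e) (factorSymbol n (2 * n + 2)) i v ∈
      idealOfVars (Fin (2 * n + 2) × Fin (2 * n)) Kc := by
    rw [fiberSum, Finset.sum_apply]
    exact Ideal.sum_mem _ fun j _ => Ideal.subset_span ⟨(j, v), rfl⟩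
  let f : Tens n (2 * n + 1) →ₐ[ℝ] Tens n (2 * n + 2) :=
    (symbolPullback (Prod.map (faceMap e) id)).restrictScalars ℝ
  have hpull : symbolPullback (Prod.map (faceMap e) id) (cochainSymbol
        ((truncExp M).map (algebraMap ℚ _)) (moyalForm n _) 0 (factorSymbol n (2 * n + 1))) =
      cochainSymbol ((truncExp M).map (algebraMap ℚ _)) (moyalForm n _) 0
        (fiberSum (faceMap e) (factorSymbol n (2 * n + 2))) := by
    refine (map_cochainSymbol f _ (γ := moyalForm n _)
      (map_moyalForm (symbolPullback (Prod.map (faceMap e) id))) _ _).trans ?_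
    rw [Polynomial.map_map, map_zero, Subsingleton.elim (f.toRingHom.comp _) (algebraMap ℚ _)]
    congr 1
    exact funext fun i => symbolPullback_factorSymbol ..
  rw [tau_eq_symbolPairing _ hface, elemT_moyalFace e a hM, mergeFactors, symbolPairing_rename,
    symbolPairing_diffOp, hpull]
  exact (symbolPairing_congr (cochainSymbol_truncExp_sub_mem M
    (fun i j => moyalForm_mem (hmem i) _) (moyalSymbol_mem_idealOfVars _ _))
    (Nat.lt_succ_of_le ha)).symm

lemma tau_elemT_eq_zero (a : Fin (2 * n + 1) → Apol n) {i : Fin (2 * n + 1)} {c : Kc} (hi : i ≠ 0)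
    (ha : a i = C c) : tau n (elemT a) = 0 := by
  obtain ⟨i, rfl⟩ := Fin.exists_succ_eq.2 hi
  have hd (v : Fin (2 * n)) : pderiv (i.succ, v) (elemT a) = 0 := by
    refine pderiv_prod_eq_zero fun j _ => ?_
    rcases eq_or_ne i.succ j with rfl | hj
    · simp [ha, embA]
    · exact pderiv_embA_of_ne hj ..
  have hmul (v : Fin (2 * n)) (P : Tens n (2 * n + 1)) :
      diffOp (X (i.succ, v) * P) (elemT a) = 0 := by
    rw [mul_comm (X _), diffOp_mul_X, hd, map_zero]
  have hpi : piOp n (elemT a) = 0 := by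
    rw [piOp_eq_diffOp, Matrix.det_eq_sum_mul_adjugate_row _ i, map_sum, LinearMap.sum_apply]
    exact Finset.sum_eq_zero fun v _ => hmul v _
  simp only [tau, hpi, map_zero, smul_zero, Finset.sum_const_zero]

lemma hochFace_eq_moyalFace (j : Fin (k + 1)) (a : Fin (k + 2) → Apol n) :
    hochFace n k j a = moyalFace j.castSucc a := by
  ext1 i
  rw [hochFace, moyalFace, faceMap_castSucc, Fin.predAbove_castSucc_self, Function.update_apply]
  rcases lt_trichotomy i j with h | rfl | h
  · rw [dif_pos (Fin.lt_def.1 h), if_neg h.ne, Function.comp_apply,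
      Fin.succAbove_castSucc_of_lt _ _ h]
    rfl
  · rw [dif_neg (lt_irrefl _), dif_pos rfl, if_pos rfl, Fin.coeSucc_eq_succ]
    rfl
  · rw [dif_neg (Fin.lt_def.1 h).not_gt, dif_neg (Fin.lt_def.1 h).ne', if_neg h.ne',
      Function.comp_apply, Fin.succAbove_castSucc_of_le _ _ h.le]
    rfl

lemma cons_moyal_eq_moyalFace (a : Fin (k + 2) → Apol n) :
    Fin.cons (moyal n (a (Fin.last (k + 1))) (a 0)) (fun i : Fin k => a i.succ.castSucc) =
      moyalFace (Fin.last (k + 1)) a := by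
  ext1 i
  rw [moyalFace, faceMap_last_last, Fin.last_add_one]
  cases i using Fin.cases <;> simp

end MoyalFaces

/-- `τ_{2n}` is a cocycle in the normalized Hochschild cochain complex of
`A^pol_{2n}`: it vanishes whenever one of `a_1,…,a_{2n}` lies in `K·1`, and the
Hochschild coboundary of `τ_{2n}` vanishes:
`τ(a_0⋆a_1⊗⋯⊗a_{2n+1}) + ∑_{j=1}^{2n} (−1)^j τ(a_0⊗⋯⊗a_j⋆a_{j+1}⊗⋯) −
τ(a_{2n+1}⋆a_0⊗a_1⊗⋯⊗a_{2n}) = 0`. -/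
theorem tau_normalized_cocycle (n : ℕ) :
    (∀ (a : Fin (2*n+1) → Apol n) (i : Fin (2*n+1)) (c : Kc),
        i ≠ 0 → a i = C c → tau n (elemT a) = 0) ∧
    (∀ a : Fin (2*n+2) → Apol n,
        (∑ j : Fin (2*n+1), (-1:Kc)^(j.1) • tau n (elemT (hochFace n (2*n) j a)))
        + (-1:Kc)^(2*n+1) •
          tau n (elemT (Fin.cons (moyal n (a (Fin.last (2*n+1))) (a 0))
            (fun i : Fin (2*n) => a ⟨i.1+1, by have := i.2; omega⟩))) = 0) := by
  refine ⟨fun a i c hi ha => tau_elemT_eq_zero a hi ha, fun a => ?_⟩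
  obtain ⟨M, hM⟩ := (Filter.eventually_all.2 fun e => tau_elemT_moyalFace e a).exists
  have hsum := congrArg (symbolPairing (elemT a)) (sum_neg_one_pow_mul_cochainSymbol
    ((truncExp M).map (algebraMap ℚ _)) (moyalForm n _) (factorSymbol n (2 * n + 2)))
  have hterm (e : Fin (2 * n + 2)) (P : Tens n (2 * n + 2)) :
      symbolPairing (elemT a) ((-1) ^ e.1 * P) = (-1 : Kc) ^ e.1 • symbolPairing (elemT a) P := by
    rw [← map_smul, smul_eq_C_mul, map_pow, map_neg, map_one]
  simp only [map_sum, hterm, map_zero] at hsum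
  calc _ = ∑ e : Fin (2 * n + 2), (-1 : Kc) ^ e.1 • tau n (elemT (moyalFace e a)) := by
        rw [Fin.sum_univ_castSucc (n := 2 * n + 1), ← cons_moyal_eq_moyalFace]
        simp only [hochFace_eq_moyalFace]
        rfl
    _ = 0 := by simpa only [hM, moyalSymbol] using hsum

end
end

section
/- τ_{2n} is sp_{2n}-invariant: for every homogeneous quadratic polynomial a ∈ sp_{2n} ⊂ A^pol_{2n} and all a_0,…,a_{2n} ∈ A^pol_{2n}, ∑_{i=0}^{2n} τ_{2n}(a_0⊗⋯⊗[a,a_i]_ε⊗⋯⊗a_{2n}) = 0. -/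
noncomputable section
open MvPolynomial MeasureTheory

/-!
All operators in `τ_{2n}` have constant coefficients: the symbol of `α_{ij}` is the Poisson bivector
in the variables of the factors `i` and `j`, and the symbol of `π_{2n}` is a determinant. In
`[a, ·]_ε` the even powers of `ε` cancel by antisymmetry and the powers of `α` beyond the second
kill a quadratic `a`, so `[a, ·]_ε` is a linear vector field whose matrix lies in the symplectic Lie
algebra. Its diagonal action on the tensor factors preserves the bivectors and, the matrix being
traceless, also the determinant; hence it commutes with the operators in `τ_{2n}` and can be moved
to the left, where `μ_{2n}` annihilates it since linear vector fields vanish at the origin.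
-/

namespace MoyalWeyl

open scoped Kronecker Matrix IsMulCommutative

section Derivations

variable {R A : Type*} [CommRing R] [CommRing A] [Algebra R A]

theorem derivation_prod_eq_sum_update {ι : Type*} [DecidableEq ι] (D : Derivation R A A)
    (s : Finset ι) (f : ι → A) :
    D (∏ i ∈ s, f i) = ∑ i ∈ s, ∏ j ∈ s, Function.update f i (D (f i)) j := by
  induction s using Finset.induction_on with
  | empty => simp
  | insert a s ha ih =>
    have update_of_mem (i) (hi : i ∈ s) :
        ∏ j ∈ insert a s, Function.update f i (D (f i)) j =
          f a * ∏ j ∈ s, Function.update f i (D (f i)) j := by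
      rw [Finset.prod_insert ha, Function.update_of_ne (ne_of_mem_of_not_mem hi ha).symm]
    rw [Finset.prod_insert ha, Derivation.leibniz, ih, Finset.sum_insert ha,
      Finset.sum_congr rfl update_of_mem, ← Finset.mul_sum, Finset.prod_insert ha,
      Function.update_self, Finset.prod_update_of_notMem ha, smul_eq_mul, smul_eq_mul,
      mul_comm (D (f a)), add_comm]

theorem derivation_det {m : Type*} [Fintype m] [DecidableEq m] (D : Derivation R A A)
    (M : Matrix m m A) : D M.det = (M.adjugate * M.map D).trace := by
  have det_updateCol (j : m) :
      (M.updateCol j (fun i => D (M i j))).det = (M.adjugate * M.map D) j j := by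
    rw [← Matrix.cramer_apply, Matrix.cramer_eq_adjugate_mulVec]
    rfl
  calc D M.det = ∑ j, (M.updateCol j (fun i => D (M i j))).det := by
        simp_rw [Matrix.det_apply]
        rw [map_sum, Finset.sum_comm]
        refine Finset.sum_congr rfl fun σ _ => ?_
        rw [Units.smul_def, map_zsmul, derivation_prod_eq_sum_update, Finset.smul_sum]
        refine Finset.sum_congr rfl fun j _ => congrArg _ (Finset.prod_congr rfl fun l _ => ?_)
        rw [Matrix.updateCol_apply, Function.update_apply]
        split_ifs with h <;> simp [h]
    _ = (M.adjugate * M.map D).trace := Finset.sum_congr rfl fun j _ => det_updateCol j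

end Derivations

section ConstantCoefficientOperators

variable {σ τ R : Type*} [CommRing R]

theorem derivation_eq_sum_pderiv [Fintype σ]
    (D : Derivation R (MvPolynomial σ R) (MvPolynomial σ R)) (f : MvPolynomial σ R) :
    D f = ∑ p, pderiv p f * D (X p) := by
  classical
  induction f using MvPolynomial.induction_on with
  | C c => simp
  | add f g hf hg => simp only [map_add, hf, hg, add_mul, Finset.sum_add_distrib]
  | mul_X f p hf =>
    have sum_pderiv_X : ∑ q, pderiv q (X p : MvPolynomial σ R) * D (X q) = D (X p) := by
      simp [pderiv_X, Pi.single_apply]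
    simp only [Derivation.leibniz, smul_eq_mul, add_mul, mul_assoc, Finset.sum_add_distrib,
      ← Finset.mul_sum, sum_pderiv_X, hf]

theorem pderiv_pderiv_comm (p q : σ) (f : MvPolynomial σ R) :
    pderiv p (pderiv q f) = pderiv q (pderiv p f) := by
  classical
  have commutator_eq_zero :
      ⁅(pderiv p : Derivation R (MvPolynomial σ R) (MvPolynomial σ R)), pderiv q⁆ = 0 :=
    derivation_ext fun r => by
      rw [Derivation.commutator_apply, pderiv_X, pderiv_X, Pi.single_apply, Pi.single_apply]
      split_ifs <;> simp
  rw [← sub_eq_zero, ← Derivation.commutator_apply, commutator_eq_zero, Derivation.coe_zero,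
    Pi.zero_apply]

theorem isMulCommutative_adjoin_pderiv :
    IsMulCommutative (Algebra.adjoin R (Set.range fun p : σ =>
      ((pderiv p).toLinearMap : Module.End R (MvPolynomial σ R)))) := by
  refine Algebra.isMulCommutative_adjoin R ?_
  rintro _ ⟨p, rfl⟩ _ ⟨q, rfl⟩
  exact LinearMap.ext (pderiv_pderiv_comm p q)

/-- The constant-coefficient differential operator with a given symbol: `X p` acts as the partial
derivative in the variable `p`. -/
def diffOp : MvPolynomial σ R →ₐ[R] Module.End R (MvPolynomial σ R) :=
  have := isMulCommutative_adjoin_pderiv (σ := σ) (R := R)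
  (Subalgebra.val _).comp (aeval fun p : σ =>
    (⟨(pderiv p).toLinearMap, Algebra.subset_adjoin ⟨p, rfl⟩⟩ :
      Algebra.adjoin R (Set.range fun p : σ =>
        ((pderiv p).toLinearMap : Module.End R (MvPolynomial σ R)))))

@[simp]
theorem diffOp_X (p : σ) :
    diffOp (X p : MvPolynomial σ R) = (pderiv p).toLinearMap := by
  simp [diffOp]

theorem diffOp_X_apply (p : σ) (x : MvPolynomial σ R) : diffOp (X p) x = pderiv p x := by
  rw [diffOp_X]
  rfl

@[simp]
theorem diffOp_C_apply (c : R) (x : MvPolynomial σ R) : diffOp (C c) x = c • x := by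
  rw [← algebraMap_eq, AlgHom.commutes, Module.algebraMap_end_apply]

theorem diffOp_mul_apply (f g x : MvPolynomial σ R) :
    diffOp (f * g) x = diffOp f (diffOp g x) := by
  rw [map_mul, Module.End.mul_apply]

theorem diffOp_rename {e : σ → τ} (he : Function.Injective e) (f x : MvPolynomial σ R) :
    diffOp (rename e f) (rename e x) = rename e (diffOp f x) := by
  induction f using MvPolynomial.induction_on generalizing x with
  | C c => simp
  | add f g hf hg => simp only [map_add, LinearMap.add_apply, hf, hg]
  | mul_X f p hf => simp [pderiv_rename he, hf]

theorem pderiv_rename_mk_of_ne {i j : σ} (hij : i ≠ j) (v : τ) (f : MvPolynomial τ R) :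
    pderiv (i, v) (rename (Prod.mk j) f) = 0 := by
  refine pderiv_eq_zero_of_notMem_vars fun hv => ?_
  obtain ⟨w, -, hw⟩ := mem_vars_rename _ f hv
  exact hij (congrArg Prod.fst hw).symm

theorem diffOp_X_pow_monomial_eq_zero {p : σ} {m : ℕ} {t : σ →₀ ℕ} (h : t p < m) (c : R) :
    diffOp (X p ^ m) (monomial t c) = 0 := by
  induction m generalizing t c with
  | zero => omega
  | succ m ih =>
    rw [pow_succ, diffOp_mul_apply, diffOp_X_apply, pderiv_monomial]
    rcases Nat.eq_zero_or_pos (t p) with h0 | h0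
    · simp [h0]
    · refine ih ?_ _
      rw [Finsupp.tsub_apply, Finsupp.single_eq_same]
      omega

theorem diffOp_monomial_monomial_eq_zero {s t : σ →₀ ℕ} (h : ¬ s ≤ t) (b c : R) :
    diffOp (monomial s b) (monomial t c) = 0 := by
  classical
  obtain ⟨p, hp⟩ : ∃ p, t p < s p := by simpa [Finsupp.le_def] using h
  have factor : monomial s b = monomial (s.erase p) b * X p ^ s p := by
    rw [X_pow_eq_monomial, monomial_mul, mul_one, Finsupp.erase_add_single]
  rw [factor, diffOp_mul_apply, diffOp_X_pow_monomial_eq_zero hp, map_zero]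

theorem diffOp_eq_zero_of_weight_lt {w : σ → ℕ} {f x : MvPolynomial σ R} {m : ℕ}
    (hf : f.IsWeightedHomogeneous w m) (hx : ∀ t ∈ x.support, Finsupp.weight w t < m) :
    diffOp f x = 0 := by
  rw [← support_sum_monomial_coeff f, map_sum, LinearMap.sum_apply]
  refine Finset.sum_eq_zero fun s hs => ?_
  rw [← support_sum_monomial_coeff x, map_sum]
  refine Finset.sum_eq_zero fun t ht => diffOp_monomial_monomial_eq_zero (fun hst => ?_) _ _
  have weight_le : Finsupp.weight w s ≤ Finsupp.weight w t := by
    rw [← add_tsub_cancel_of_le hst, map_add]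
    exact Nat.le_add_right _ _
  exact (hx t ht).not_ge (hf (mem_support_iff.mp hs) ▸ weight_le)

theorem isWeightedHomogeneous_rename {M : Type*} [AddCommMonoid M] {w : τ → M} {e : σ → τ}
    {f : MvPolynomial σ R} {m : M} (hf : f.IsWeightedHomogeneous (w ∘ e) m) :
    (rename e f).IsWeightedHomogeneous w m := by
  intro d hd
  obtain ⟨u, rfl, hu⟩ := coeff_rename_ne_zero e f d hd
  rw [← hf hu, Finsupp.weight, Finsupp.weight]
  exact Finsupp.linearCombination_mapDomain ℕ e u

end ConstantCoefficientOperators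

section LinearVectorFields

variable {σ R : Type*} [Fintype σ] [CommRing R]

/-- The linear vector field on affine space with matrix `M`, as a derivation:
`X p ↦ ∑ q, M p q * X q`. -/
def linearDerivation (M : Matrix σ σ R) :
    Derivation R (MvPolynomial σ R) (MvPolynomial σ R) :=
  mkDerivation R fun p => ∑ q, C (M p q) * X q

@[simp]
theorem linearDerivation_X (M : Matrix σ σ R) (p : σ) :
    linearDerivation M (X p) = ∑ q, C (M p q) * X q :=
  mkDerivation_X ..

theorem constantCoeff_linearDerivation (M : Matrix σ σ R) (f : MvPolynomial σ R) :
    constantCoeff (linearDerivation M f) = 0 := by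
  simp [derivation_eq_sum_pderiv (linearDerivation M) f]

theorem pderiv_linearDerivation (M : Matrix σ σ R) (p : σ) (f : MvPolynomial σ R) :
    pderiv p (linearDerivation M f) =
      linearDerivation M (pderiv p f) + ∑ q, M q p • pderiv q f := by
  classical
  have commutator_X (q : σ) :
      ⁅(pderiv p : Derivation R (MvPolynomial σ R) _), linearDerivation M⁆ (X q) =
        C (M q p) := by
    simp [Derivation.commutator_apply, pderiv_X, Pi.single_apply, apply_ite]
  rw [← sub_eq_iff_eq_add', ← Derivation.commutator_apply, derivation_eq_sum_pderiv]
  simp only [commutator_X, smul_eq_C_mul, mul_comm]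

theorem diffOp_linearDerivation (M : Matrix σ σ R) (f x : MvPolynomial σ R) :
    diffOp f (linearDerivation M x) =
      linearDerivation M (diffOp f x) + diffOp (linearDerivation Mᵀ f) x := by
  induction f using MvPolynomial.induction_on generalizing x with
  | C c => simp
  | add f g hf hg => simp only [map_add, LinearMap.add_apply, hf, hg]; abel
  | mul_X f p hf =>
    have diffOp_linearDerivation_X :
        diffOp (linearDerivation Mᵀ (X p)) x = ∑ q, M q p • pderiv q x := by
      simp [LinearMap.sum_apply]
    rw [Derivation.leibniz, smul_eq_mul, smul_eq_mul, map_add, LinearMap.add_apply, mul_comm (X p),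
      diffOp_mul_apply, diffOp_mul_apply, diffOp_mul_apply, diffOp_mul_apply,
      diffOp_linearDerivation_X, diffOp_X_apply, diffOp_X_apply, pderiv_linearDerivation, map_add,
      hf]
    abel

theorem diffOp_linearDerivation_of_invariant {M : Matrix σ σ R} {f : MvPolynomial σ R}
    (hf : linearDerivation Mᵀ f = 0) (x : MvPolynomial σ R) :
    diffOp f (linearDerivation M x) = linearDerivation M (diffOp f x) := by
  rw [diffOp_linearDerivation, hf, map_zero, LinearMap.zero_apply, add_zero]

end LinearVectorFields

section DiagonalVectorFields

variable {κ ι R : Type*} [Fintype κ] [DecidableEq κ] [Fintype ι] [CommRing R]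

theorem linearDerivation_one_kronecker_X (M : Matrix ι ι R) (i : κ) (v : ι) :
    linearDerivation ((1 : Matrix κ κ R) ⊗ₖ M) (X (i, v)) = ∑ w, C (M v w) * X (i, w) := by
  rw [linearDerivation_X, Fintype.sum_prod_type, Finset.sum_eq_single i]
  · simp
  · intro j _ hj
    simp [Matrix.one_apply_ne' hj]
  · simp

theorem linearDerivation_one_kronecker_rename (M : Matrix ι ι R) (i : κ)
    (f : MvPolynomial ι R) :
    linearDerivation ((1 : Matrix κ κ R) ⊗ₖ M) (rename (Prod.mk i) f) =
      rename (Prod.mk i) (linearDerivation M f) := by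
  induction f using MvPolynomial.induction_on with
  | C c => simp
  | add f g hf hg => simp only [map_add, hf, hg]
  | mul_X f v hf =>
    rw [map_mul, rename_X, Derivation.leibniz, Derivation.leibniz, hf,
      linearDerivation_one_kronecker_X]
    simp

theorem linearDerivation_one_kronecker_det [DecidableEq ι] (M : Matrix ι ι R) (s : ι → κ) :
    linearDerivation ((1 : Matrix κ κ R) ⊗ₖ M) (Matrix.of fun v m => X (s m, v)).det =
      C M.trace * (Matrix.of fun v m => X (s m, v)).det := by
  set A : Matrix ι ι (MvPolynomial (κ × ι) R) := Matrix.of fun v m => X (s m, v)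
  have map_eq : A.map (linearDerivation ((1 : Matrix κ κ R) ⊗ₖ M)) = M.map C * A := by
    ext1 v m
    simp only [A, Matrix.map_apply, Matrix.of_apply, Matrix.mul_apply,
      linearDerivation_one_kronecker_X]
  rw [derivation_det, map_eq, Matrix.trace_mul_comm, Matrix.mul_assoc, Matrix.mul_adjugate,
    Matrix.mul_smul, Matrix.mul_one, Matrix.trace_smul, smul_eq_mul, mul_comm]
  simp [Matrix.trace]

theorem linearDerivation_one_kronecker_prod_rename (M : Matrix ι ι R)
    (b : κ → MvPolynomial ι R) :
    linearDerivation ((1 : Matrix κ κ R) ⊗ₖ M) (∏ i, rename (Prod.mk i) (b i)) =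
      ∑ i, ∏ j, rename (Prod.mk j) (Function.update b i (linearDerivation M (b i)) j) := by
  rw [derivation_prod_eq_sum_update]
  refine Finset.sum_congr rfl fun i _ => Finset.prod_congr rfl fun j _ => ?_
  rw [linearDerivation_one_kronecker_rename]
  exact (Function.apply_update (fun j => rename (Prod.mk j)) b i _ j).symm

end DiagonalVectorFields

section Bivectors

variable {κ ι R : Type*} [Fintype ι] [CommRing R]

/-- The symbol of the bidifferential operator `∑ v w, P v w ∂_v ⊗ ∂_w` acting on the tensor
factors `i` and `j`, where the variable `(i, v)` is the copy of `v` in the factor `i`. -/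
def bivector (i j : κ) : Matrix ι ι R →ₗ[R] MvPolynomial (κ × ι) R where
  toFun P := ∑ v, ∑ w, C (P v w) * (X (i, v) * X (j, w))
  map_add' P Q := by simp [add_mul, Finset.sum_add_distrib]
  map_smul' c P := by simp [Finset.smul_sum, smul_eq_C_mul, mul_assoc]

theorem bivector_apply (i j : κ) (P : Matrix ι ι R) :
    bivector i j P = ∑ v, ∑ w, C (P v w) * (X (i, v) * X (j, w)) :=
  rfl

theorem bivector_single [DecidableEq ι] (i j : κ) (v w : ι) :
    bivector i j (Matrix.single v w (1 : R)) = X (i, v) * X (j, w) := by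
  rw [bivector_apply, Finset.sum_eq_single v, Finset.sum_eq_single w]
  · simp
  · intro w' _ hw
    simp [hw.symm]
  · simp
  · intro v' _ hv
    simp [hv.symm]
  · simp

theorem diffOp_bivector_apply (i j : κ) (P : Matrix ι ι R) (x : MvPolynomial (κ × ι) R) :
    diffOp (bivector i j P) x = ∑ v, ∑ w, P v w • pderiv (i, v) (pderiv (j, w) x) := by
  simp [bivector_apply, LinearMap.sum_apply]

theorem bivector_swap (i j : κ) (P : Matrix ι ι R) : bivector j i P = bivector i j Pᵀ := by
  rw [bivector_apply, Finset.sum_comm]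
  simp only [bivector_apply, Matrix.transpose_apply, mul_comm]

theorem rename_bivector {κ' : Type*} (e : κ → κ') (i j : κ) (P : Matrix ι ι R) :
    rename (Prod.map e id) (bivector i j P) = bivector (e i) (e j) P := by
  simp [bivector_apply]

theorem isWeightedHomogeneous_bivector (c : κ → ℕ) (i j : κ) (P : Matrix ι ι R) :
    (bivector i j P).IsWeightedHomogeneous (fun p : κ × ι => c p.1) (c i + c j) :=
  .sum _ _ _ fun _ _ => .sum _ _ _ fun _ _ =>
    ((isWeightedHomogeneous_X R _ _).mul (isWeightedHomogeneous_X R _ _)).C_mul _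

theorem linearDerivation_one_kronecker_bivector [Fintype κ] [DecidableEq κ]
    (M P : Matrix ι ι R) (i j : κ) :
    linearDerivation ((1 : Matrix κ κ R) ⊗ₖ M) (bivector i j P) =
      bivector i j (Mᵀ * P + P * M) := by
  have left_term : bivector i j (Mᵀ * P) =
      ∑ v, ∑ w, C (P v w) * (linearDerivation ((1 : Matrix κ κ R) ⊗ₖ M) (X (i, v)) * X (j, w)) := by
    simp only [bivector_apply, Matrix.mul_apply, Matrix.transpose_apply, map_sum, map_mul,
      linearDerivation_one_kronecker_X, Finset.sum_mul, Finset.mul_sum]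
    rw [Finset.sum_comm_cycle]
    refine Finset.sum_congr rfl fun v _ => Finset.sum_comm.trans ?_
    exact Finset.sum_congr rfl fun w _ => Finset.sum_congr rfl fun u _ => by ring
  have right_term : bivector i j (P * M) =
      ∑ v, ∑ w, C (P v w) * (X (i, v) * linearDerivation ((1 : Matrix κ κ R) ⊗ₖ M) (X (j, w))) := by
    simp only [bivector_apply, Matrix.mul_apply, map_sum, map_mul, linearDerivation_one_kronecker_X,
      Finset.sum_mul, Finset.mul_sum]
    refine Finset.sum_congr rfl fun v _ => Finset.sum_comm.trans ?_
    exact Finset.sum_congr rfl fun w _ => Finset.sum_congr rfl fun u _ => by ring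
  rw [map_add, left_term, right_term, bivector_apply, map_sum, ← Finset.sum_add_distrib]
  refine Finset.sum_congr rfl fun v _ => ?_
  rw [map_sum, ← Finset.sum_add_distrib]
  refine Finset.sum_congr rfl fun w _ => ?_
  simp only [Derivation.leibniz, derivation_C, smul_eq_mul, mul_zero, add_zero]
  ring

theorem rename_snd_diffOp_bivector_rename_mul_rename {i j : κ} (hij : i ≠ j) (P : Matrix ι ι R)
    (f g : MvPolynomial ι R) :
    rename Prod.snd (diffOp (bivector i j P) (rename (Prod.mk i) f * rename (Prod.mk j) g)) =
      ∑ v, ∑ w, P v w • (pderiv v f * pderiv w g) := by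
  have rename_snd_rename_mk (k : κ) (h : MvPolynomial ι R) :
      rename Prod.snd (rename (Prod.mk k) h) = h := by
    rw [rename_rename]
    exact rename_id_apply h
  simp [diffOp_bivector_apply, pderiv_rename (Prod.mk_right_injective _),
    pderiv_rename_mk_of_ne hij, pderiv_rename_mk_of_ne hij.symm, rename_snd_rename_mk, mul_comm]

end Bivectors

section QuadraticHamiltonians

variable {ι R : Type*} [CommRing R]

/-- The Hessian matrix of a polynomial at the origin. -/
def hessian (a : MvPolynomial ι R) : Matrix ι ι R :=
  Matrix.of fun v w => constantCoeff (pderiv v (pderiv w a))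

theorem hessian_transpose (a : MvPolynomial ι R) : (hessian a)ᵀ = hessian a := by
  ext v w
  exact congrArg constantCoeff (pderiv_pderiv_comm w v a)

theorem pderiv_eq_sum_hessian [Fintype ι] {a : MvPolynomial ι R} (ha : a.IsHomogeneous 2) (v : ι) :
    pderiv v a = ∑ w, C (hessian a v w) * X w := by
  have second_pderiv_eq_C (w : ι) : pderiv w (pderiv v a) = C (hessian a v w) := by
    have isHomogeneous_zero : (pderiv w (pderiv v a)).IsHomogeneous 0 := ha.pderiv.pderiv
    rw [← totalDegree_zero_iff_isHomogeneous, totalDegree_eq_zero_iff_eq_C] at isHomogeneous_zero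
    rw [isHomogeneous_zero, hessian, Matrix.of_apply, pderiv_pderiv_comm v w]
    rfl
  have euler : ∑ w, X w * pderiv w (pderiv v a) = 1 • pderiv v a :=
    IsHomogeneous.sum_X_mul_pderiv ha.pderiv
  rw [one_smul] at euler
  rw [← euler]
  simp only [second_pderiv_eq_C, mul_comm]

variable [Fintype ι]

/-- The matrix of the Hamiltonian vector field `g ↦ 2 ∑ v w, P v w * ∂_v a * ∂_w g` of a quadratic
form `a`. The factor `2` makes it the `ε`-commutator with `a` when the star product is
`exp (ε P)`. -/
def hamiltonianMatrix (P : Matrix ι ι R) (a : MvPolynomial ι R) : Matrix ι ι R :=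
  2 • (Pᵀ * hessian a)

theorem linearDerivation_hamiltonianMatrix (P : Matrix ι ι R) {a : MvPolynomial ι R}
    (ha : a.IsHomogeneous 2) (g : MvPolynomial ι R) :
    linearDerivation (hamiltonianMatrix P a) g =
      2 • ∑ v, ∑ w, P v w • (pderiv v a * pderiv w g) := by
  have linearDerivation_X_eq (w : ι) :
      linearDerivation (hamiltonianMatrix P a) (X w) = 2 • ∑ v, P v w • pderiv v a := by
    simp only [linearDerivation_X, hamiltonianMatrix, Matrix.smul_apply, Matrix.mul_apply,
      Matrix.transpose_apply, pderiv_eq_sum_hessian ha, map_nsmul, map_sum, map_mul, smul_eq_C_mul,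
      Finset.sum_mul, smul_mul_assoc, mul_assoc, Finset.smul_sum]
    exact Finset.sum_comm
  rw [derivation_eq_sum_pderiv, Finset.sum_comm, Finset.smul_sum]
  refine Finset.sum_congr rfl fun w _ => ?_
  rw [linearDerivation_X_eq, mul_smul_comm, Finset.mul_sum]
  simp only [mul_smul_comm, mul_comm]

theorem trace_hamiltonianMatrix {P : Matrix ι ι R} (hP : Pᵀ = -P) (a : MvPolynomial ι R) :
    (hamiltonianMatrix P a).trace = 0 := by
  have trace_eq_neg : (Pᵀ * hessian a).trace = -(Pᵀ * hessian a).trace :=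
    calc (Pᵀ * hessian a).trace = (hessian a * P).trace := by
          rw [← Matrix.trace_transpose, Matrix.transpose_mul, hessian_transpose,
            Matrix.transpose_transpose]
      _ = (P * hessian a).trace := Matrix.trace_mul_comm _ _
      _ = -(Pᵀ * hessian a).trace := by rw [hP, Matrix.neg_mul, Matrix.trace_neg, neg_neg]
  rw [hamiltonianMatrix, two_nsmul, Matrix.trace_add]
  exact eq_neg_iff_add_eq_zero.mp trace_eq_neg

theorem hamiltonianMatrix_mul_add_mul_transpose {P : Matrix ι ι R} (hP : Pᵀ = -P)
    (a : MvPolynomial ι R) :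
    hamiltonianMatrix P a * P + P * (hamiltonianMatrix P a)ᵀ = 0 := by
  simp [hamiltonianMatrix, Matrix.transpose_mul, hessian_transpose, hP, Matrix.mul_assoc]

end QuadraticHamiltonians

section MoyalProduct

/-- The Poisson matrix of the symplectic variables, with the factor `1/2` of `α` included. -/
def poissonMatrix (n : ℕ) : Matrix (Fin (2 * n)) (Fin (2 * n)) Kc :=
  algebraMap ℂ Kc (1 / 2) • ∑ r : Fin n,
    (Matrix.single (pVar n r) (qVar n r) 1 - Matrix.single (qVar n r) (pVar n r) 1)

theorem poissonMatrix_transpose (n : ℕ) : (poissonMatrix n)ᵀ = -poissonMatrix n := by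
  simp [poissonMatrix, Matrix.transpose_sum, ← smul_neg]

theorem alphaOp_eq_diffOp (n k : ℕ) (i j : Fin k) :
    alphaOp n k i j = diffOp (bivector i j (poissonMatrix n)) := by
  simp only [alphaOp, Dop, poissonMatrix, map_smul, map_sum, map_sub, bivector_single, map_mul,
    diffOp_X]

theorem elemT_pair {n : ℕ} (f g : Apol n) :
    (elemT ![f, g] : Tens n 2) = rename (Prod.mk 0) f * rename (Prod.mk 1) g :=
  Fin.prod_univ_two _

theorem alphaOp_pow_apply_eq_zero {n k : ℕ} (c : Fin k → ℕ) {i j : Fin k} {m : ℕ} {x : Tens n k}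
    (hx : ∀ t ∈ x.support, Finsupp.weight (fun p : Fin k × Fin (2 * n) => c p.1) t
      < m * (c i + c j)) :
    (alphaOp n k i j ^ m) x = 0 := by
  rw [alphaOp_eq_diffOp, ← map_pow]
  exact diffOp_eq_zero_of_weight_lt ((isWeightedHomogeneous_bivector c i j _).pow m) hx

theorem alphaOp_pow_apply_eq_zero_of_totalDegree_lt {n k : ℕ} (i j : Fin k) {m : ℕ}
    {x : Tens n k} (hx : x.totalDegree < m) : (alphaOp n k i j ^ m) x = 0 := by
  refine alphaOp_pow_apply_eq_zero 1 fun t ht => ?_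
  have weight_le : Finsupp.weight 1 t ≤ x.totalDegree := by
    rw [← weightedTotalDegree_one]
    exact le_weightedTotalDegree 1 ht
  calc Finsupp.weight 1 t < m := weight_le.trans_lt hx
    _ ≤ m * (1 + 1) := by omega

theorem alphaOp_zero_one_pow_apply_elemT_eq_zero {n d m : ℕ} {f : Apol n} (hf : f.IsHomogeneous d)
    (hm : d < m) (g : Apol n) : (alphaOp n 2 0 1 ^ m) (elemT ![f, g]) = 0 := by
  have elemT_homogeneous : (elemT ![f, g] : Tens n 2).IsWeightedHomogeneous
      (fun p : Fin 2 × Fin (2 * n) => (![1, 0] : Fin 2 → ℕ) p.1) d := by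
    rw [elemT_pair]
    refine .mul (n := 0) (isWeightedHomogeneous_rename hf) (isWeightedHomogeneous_rename ?_)
    intro t _
    exact Finsupp.linearCombination_zero_apply ..
  refine alphaOp_pow_apply_eq_zero ![1, 0] fun t ht => ?_
  simpa [elemT_homogeneous (mem_support_iff.mp ht)] using hm

theorem expEps_alphaOp_eq_sum_range {n k : ℕ} (i j : Fin k) {x : Tens n k} {N : ℕ}
    (hN : x.totalDegree < N) :
    expEps (alphaOp n k i j) x = ∑ m ∈ Finset.range N,
      (algebraMap ℂ Kc ((m.factorial : ℂ)⁻¹) * eps ^ m) • (alphaOp n k i j ^ m) x := by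
  refine Finset.sum_subset (Finset.range_mono hN) fun m _ hm => ?_
  rw [alphaOp_pow_apply_eq_zero_of_totalDegree_lt, smul_zero]
  simpa using hm

theorem moyal_eq_sum_range {n : ℕ} {f g : Apol n} {N : ℕ}
    (hN : (elemT ![f, g] : Tens n 2).totalDegree < N) :
    moyal n f g = ∑ m ∈ Finset.range N, (algebraMap ℂ Kc ((m.factorial : ℂ)⁻¹) * eps ^ m) •
      rename Prod.snd ((alphaOp n 2 0 1 ^ m) (elemT ![f, g])) := by
  have multiplication_eq_rename :
      (aeval fun v : Fin 2 × Fin (2 * n) => (X v.2 : Apol n)) = rename Prod.snd :=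
    algHom_ext fun v => by rw [aeval_X, rename_X]
  rw [moyal, multiplication_eq_rename, expEps_alphaOp_eq_sum_range 0 1 hN, map_sum]
  simp only [map_smul]

theorem elemT_swap (n : ℕ) (f g : Apol n) :
    (elemT ![g, f] : Tens n 2) =
      rename (Prod.map (Equiv.swap (0 : Fin 2) 1) id) (elemT ![f, g]) := by
  have swap_comp_mk (i : Fin 2) :
      Prod.map (Equiv.swap (0 : Fin 2) 1) (id : Fin (2 * n) → Fin (2 * n)) ∘ Prod.mk i =
        Prod.mk (Equiv.swap 0 1 i) :=
    rfl
  rw [elemT_pair, elemT_pair, map_mul, rename_rename, rename_rename, swap_comp_mk, swap_comp_mk,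
    Equiv.swap_apply_left, Equiv.swap_apply_right, mul_comm]

theorem rename_snd_alphaOp_pow_elemT_swap (n m : ℕ) (f g : Apol n) :
    rename Prod.snd ((alphaOp n 2 0 1 ^ m) (elemT ![g, f])) =
      ((-1) ^ m : Kc) • rename Prod.snd ((alphaOp n 2 0 1 ^ m) (elemT ![f, g])) := by
  set swap : Fin 2 × Fin (2 * n) → Fin 2 × Fin (2 * n) := Prod.map (Equiv.swap 0 1) id
  have swap_injective : Function.Injective swap :=
    (Equiv.injective _).prodMap Function.injective_id
  have bivector_eq : bivector 0 1 (poissonMatrix n) =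
      rename swap (-bivector 0 1 (poissonMatrix n)) := by
    rw [map_neg, rename_bivector, Equiv.swap_apply_left, Equiv.swap_apply_right, bivector_swap 0 1,
      poissonMatrix_transpose, map_neg, neg_neg]
  rw [alphaOp_eq_diffOp, ← map_pow, elemT_swap]
  conv_lhs => rw [bivector_eq]
  have neg_one_pow_eq_C : (-1 : Tens n 2) ^ m = C ((-1) ^ m) := by simp
  rw [← map_pow, diffOp_rename swap_injective, rename_rename, neg_pow, neg_one_pow_eq_C,
    diffOp_mul_apply, diffOp_C_apply, map_smul]
  simp [swap, Function.comp_def]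

theorem rename_snd_alphaOp_elemT (n : ℕ) (f g : Apol n) :
    rename Prod.snd (alphaOp n 2 0 1 (elemT ![f, g])) =
      ∑ v, ∑ w, poissonMatrix n v w • (pderiv v f * pderiv w g) := by
  rw [alphaOp_eq_diffOp, elemT_pair, rename_snd_diffOp_bivector_rename_mul_rename Fin.zero_ne_one]

theorem brkt_eq_linearDerivation {n : ℕ} {a : Apol n} (ha : a.IsHomogeneous 2) (g : Apol n) :
    brkt n a g = linearDerivation (hamiltonianMatrix (poissonMatrix n) a) g := by
  set N := (elemT ![a, g] : Tens n 2).totalDegree + (elemT ![g, a] : Tens n 2).totalDegree + 2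
  have moyal_sub : moyal n a g - moyal n g a =
      (2 * eps) • rename Prod.snd (alphaOp n 2 0 1 (elemT ![a, g])) := by
    rw [moyal_eq_sum_range (N := N) (by omega), moyal_eq_sum_range (N := N) (by omega),
      ← Finset.sum_sub_distrib, Finset.sum_eq_single_of_mem 1 (by simp [N])]
    · rw [rename_snd_alphaOp_pow_elemT_swap n 1 a g, pow_one, pow_one, pow_one, neg_one_smul,
        smul_neg, sub_neg_eq_add, ← two_smul Kc, smul_smul, Nat.factorial_one, Nat.cast_one,
        inv_one, map_one, one_mul]
    · intro m _ hm
      rw [rename_snd_alphaOp_pow_elemT_swap n m a g]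
      rcases Nat.lt_or_ge 2 m with h | h
      · simp [alphaOp_zero_one_pow_apply_elemT_eq_zero ha h]
      · have m_even : Even m := by interval_cases m <;> simp_all
        rw [m_even.neg_one_pow, one_smul, sub_self]
  have inv_eps_mul : (LaurentPolynomial.T (-1) : Kc) * (2 * eps) = 2 := by
    rw [mul_left_comm, eps, ← LaurentPolynomial.T_add, neg_add_cancel, LaurentPolynomial.T_zero,
      mul_one]
  rw [brkt, moyal_sub, smul_smul, inv_eps_mul, rename_snd_alphaOp_elemT,
    linearDerivation_hamiltonianMatrix _ ha, ofNat_smul_eq_nsmul]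

theorem isHomogeneous_of_mem_spSub {n : ℕ} {a : Apol n} (ha : a ∈ spSub n) :
    a.IsHomogeneous 2 := by
  have span_le : spSub n ≤ (homogeneousSubmodule (Fin (2 * n)) Kc 2).restrictScalars ℂ := by
    refine Submodule.span_le.mpr ?_
    rintro _ ⟨i, j, rfl⟩
    exact (isHomogeneous_X Kc i).mul (isHomogeneous_X Kc j)
  exact span_le ha

end MoyalProduct

section Cochain

theorem piOp_eq_diffOp (n : ℕ) :
    piOp n = diffOp (Matrix.of fun v (m : Fin (2 * n)) => X (m.succ, v)).det := by
  rw [Matrix.det_apply, piOp, map_sum]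
  refine Finset.sum_congr rfl fun σ _ => ?_
  rw [← List.prod_ofFn, Units.smul_def, map_zsmul, map_list_prod, List.map_ofFn]
  have map_entry (m : Fin (2 * n)) :
      diffOp (Matrix.of (fun v (m : Fin (2 * n)) => (X (m.succ, v) : Tens n (2 * n + 1))) (σ m) m) =
        Dop n (2 * n + 1) m.succ (σ m) :=
    diffOp_X _
  simp only [Function.comp_def, map_entry]

theorem alphaPowProd_eq_diffOp (n k : ℕ) (K : Pairs k → ℕ) :
    alphaPowProd n k K = diffOp (∏ p : Pairs k, bivector p.1.1 p.1.2 (poissonMatrix n) ^ K p) := by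
  rw [alphaPowProd, ← Finset.prod_map_toList, map_list_prod, List.map_map]
  simp [Function.comp_def, alphaOp_eq_diffOp]

theorem alphaPowProd_piOp_eq_zero {n : ℕ} {K : Pairs (2 * n + 1) → ℕ} {x : Tens n (2 * n + 1)}
    {p : Pairs (2 * n + 1)} (hp : x.totalDegree < K p) :
    alphaPowProd n (2 * n + 1) K (piOp n x) = 0 := by
  rw [alphaPowProd_eq_diffOp, piOp_eq_diffOp, ← diffOp_mul_apply,
    ← Finset.prod_erase_mul _ _ (Finset.mem_univ p), mul_right_comm, diffOp_mul_apply, map_pow,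
    ← alphaOp_eq_diffOp, alphaOp_pow_apply_eq_zero_of_totalDegree_lt _ _ hp, map_zero]

/-- The coefficient of `∏ α_{ij}^{K(i,j)}` in the Taylor expansion of `τ_{2n}`. -/
def tauCoeff (n : ℕ) (K : Pairs (2 * n + 1) → ℕ) : Kc :=
  algebraMap ℂ Kc
      (((∫ u in simplexSet (2 * n), ∏ p : Pairs (2 * n + 1),
          (2 * cons0 (2 * n) u p.1.1 - 2 * cons0 (2 * n) u p.1.2 + 1) ^ K p : ℝ) : ℂ)
        * (∏ p : Pairs (2 * n + 1), ((K p).factorial : ℂ))⁻¹)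
    * eps ^ (∑ p : Pairs (2 * n + 1), K p)

theorem tau_eq_sum_tauCoeff {n N : ℕ} {x : Tens n (2 * n + 1)} (hN : x.totalDegree < N) :
    tau n x = ∑ K ∈ Fintype.piFinset fun _ : Pairs (2 * n + 1) => Finset.range N,
      tauCoeff n K • constantCoeff (alphaPowProd n (2 * n + 1) K (piOp n x)) := by
  refine Finset.sum_subset (Fintype.piFinset_subset _ _ fun _ => Finset.range_mono hN)
    fun K _ hK => ?_
  obtain ⟨p, hp⟩ : ∃ p, x.totalDegree < K p := by simpa [Fintype.mem_piFinset] using hK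
  rw [alphaPowProd_piOp_eq_zero hp, map_zero, smul_zero]

theorem tau_sum {ι : Type*} (n : ℕ) (s : Finset ι) (x : ι → Tens n (2 * n + 1)) :
    tau n (∑ i ∈ s, x i) = ∑ i ∈ s, tau n (x i) := by
  set N := s.sup (fun i => (x i).totalDegree) + 1
  have totalDegree_sum_lt : (∑ i ∈ s, x i).totalDegree < N :=
    Nat.lt_succ_of_le (totalDegree_finsetSum s x)
  have totalDegree_lt (i) (hi : i ∈ s) : (x i).totalDegree < N :=
    Nat.lt_succ_of_le (Finset.le_sup (f := fun i => (x i).totalDegree) hi)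
  rw [tau_eq_sum_tauCoeff totalDegree_sum_lt,
    Finset.sum_congr rfl fun i hi => tau_eq_sum_tauCoeff (totalDegree_lt i hi), Finset.sum_comm]
  simp only [map_sum, Finset.smul_sum]

theorem tau_linearDerivation_one_kronecker {n : ℕ} {M : Matrix (Fin (2 * n)) (Fin (2 * n)) Kc}
    (hM : M * poissonMatrix n + poissonMatrix n * Mᵀ = 0) (hM_trace : M.trace = 0)
    (x : Tens n (2 * n + 1)) : tau n (linearDerivation (1 ⊗ₖ M) x) = 0 := by
  set D : Derivation Kc (Tens n (2 * n + 1)) (Tens n (2 * n + 1)) :=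
    linearDerivation (1 ⊗ₖ M)ᵀ with hD
  have D_eq : D = linearDerivation (1 ⊗ₖ Mᵀ) := by
    rw [hD, ← Matrix.kroneckerMap_transpose, Matrix.transpose_one]
  have D_bivector (i j) : D (bivector i j (poissonMatrix n)) = 0 := by
    rw [D_eq, linearDerivation_one_kronecker_bivector, Matrix.transpose_transpose, hM, map_zero]
  have D_prod (K : Pairs (2 * n + 1) → ℕ) :
      D (∏ p : Pairs (2 * n + 1), bivector p.1.1 p.1.2 (poissonMatrix n) ^ K p) = 0 := by
    refine Finset.prod_induction _ (fun f => D f = 0) (fun f g hf hg => ?_)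
      D.map_one_eq_zero fun p _ => ?_
    · rw [Derivation.leibniz, hf, hg, smul_zero, smul_zero, add_zero]
    · rw [Derivation.leibniz_pow, D_bivector, smul_zero, smul_zero]
  have D_det : D (Matrix.of fun v (m : Fin (2 * n)) => X (m.succ, v)).det = 0 := by
    rw [D_eq, linearDerivation_one_kronecker_det, Matrix.trace_transpose, hM_trace, C_0, zero_mul]
  refine Finset.sum_eq_zero fun K _ => ?_
  rw [piOp_eq_diffOp, alphaPowProd_eq_diffOp, diffOp_linearDerivation_of_invariant D_det,
    diffOp_linearDerivation_of_invariant (D_prod K), constantCoeff_linearDerivation, smul_zero]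

theorem linearDerivation_one_kronecker_elemT {n k : ℕ} (M : Matrix (Fin (2 * n)) (Fin (2 * n)) Kc)
    (b : Fin k → Apol n) :
    linearDerivation (1 ⊗ₖ M) (elemT b) =
      ∑ i, elemT (Function.update b i (linearDerivation M (b i))) :=
  linearDerivation_one_kronecker_prod_rename M b

end Cochain

end MoyalWeyl

open MoyalWeyl in
theorem tau_sp_invariant_general (n : ℕ) (a : Apol n) (ha : a.IsHomogeneous 2)
    (b : Fin (2 * n + 1) → Apol n) :
    ∑ i : Fin (2 * n + 1), tau n (elemT (Function.update b i (brkt n a (b i)))) = 0 := by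
  simp only [brkt_eq_linearDerivation ha]
  rw [← tau_sum, ← linearDerivation_one_kronecker_elemT]
  exact tau_linearDerivation_one_kronecker
    (hamiltonianMatrix_mul_add_mul_transpose (poissonMatrix_transpose n) a)
    (trace_hamiltonianMatrix (poissonMatrix_transpose n) a) _

/-- `τ_{2n}` is `sp_{2n}`-invariant: for every homogeneous quadratic
polynomial `a ∈ sp_{2n} ⊂ A^pol_{2n}` and all `a_0,…,a_{2n}`,
`∑_{i=0}^{2n} τ_{2n}(a_0⊗⋯⊗[a,a_i]_ε⊗⋯⊗a_{2n}) = 0`. -/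
theorem tau_sp_invariant (n : ℕ) (a : Apol n) (ha : a ∈ spSub n)
    (b : Fin (2*n+1) → Apol n) :
    ∑ i : Fin (2*n+1), tau n (elemT (Function.update b i (brkt n a (b i)))) = 0 :=
  tau_sp_invariant_general n a (MoyalWeyl.isHomogeneous_of_mem_spSub ha) b

end
end

section
/- τ_{2n}(c_{2n}) = 1, where c_{2n} = ∑_{σ∈S_{2n}} sign(σ) 1⊗y_{σ(1)}⊗⋯⊗y_{σ(2n)} ∈ A^{⊗(2n+1)}. -/
noncomputable section
open MvPolynomial MeasureTheory

/-- The cycle `c_{2n} = ∑_{σ∈S_{2n}} sign(σ) 1⊗y_{σ(1)}⊗⋯⊗y_{σ(2n)}`. -/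
def c2n (n : ℕ) : Tens n (2*n+1) :=
  ∑ σ : Equiv.Perm (Fin (2*n)), (Equiv.Perm.sign σ : ℤ) •
    elemT (Fin.cons 1 (fun i : Fin (2*n) => (X (σ i) : Apol n)))

/-!
On `1 ⊗ y_{σ(1)} ⊗ ⋯ ⊗ y_{σ(2n)}` only the summand of `π_{2n}` indexed by the same `σ` survives,
and it gives `sign σ`; the two signs cancel in `c_{2n}`, so `π_{2n}(c_{2n}) = (2n)!`. This is a
constant, so every `α_{ij}` kills it and each exponential contributes only its zeroth Taylor
coefficient. The integral is therefore `(2n)!` times the volume of `Δ_{2n}`. That volume is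
`1/(2n)!` because the images of the simplex under permuting coordinates cover the cube, and two
of them overlap only where two coordinates agree, a null set.
-/

section OrderedTuples

variable {ι α : Type*} [MeasurableSpace α]

section Coordinates

variable [Fintype ι]

theorem measure_pi_setOf_apply_eq [MeasurableEq α] (μ : ι → Measure α)
    [∀ i, SigmaFinite (μ i)] {i j : ι} [NullSingletonClass (μ i)] (hij : i ≠ j) :
    Measure.pi μ {u | u i = u j} = 0 := by
  classical
  let D : Set (({k // k = j} → α) × ({k // k ≠ j} → α)) := {w | w.2 ⟨i, hij⟩ = w.1 ⟨j, rfl⟩}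
  have hD : MeasurableSet D := measurableSet_eq_fun (by fun_prop) (by fun_prop)
  refine ((measurePreserving_piEquivPiSubtypeProd μ (· = j)).measure_preimage
    hD.nullMeasurableSet).trans ?_
  refine Measure.measure_prod_null_of_ae_null hD <| .of_forall fun v => ?_
  exact Measure.pi_hyperplane (fun k : {k // k ≠ j} => μ k) ⟨i, hij⟩ (v ⟨j, rfl⟩)

theorem ae_pi_injective [MeasurableEq α] (μ : ι → Measure α) [∀ i, SigmaFinite (μ i)]
    [∀ i, NullSingletonClass (μ i)] : ∀ᵐ u ∂Measure.pi μ, Function.Injective u := by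
  have hne : ∀ᵐ u ∂Measure.pi μ, ∀ i j, i ≠ j → u i ≠ u j := by
    simp only [ae_all_iff]
    intro i j hij
    simpa only [ae_iff, not_not] using measure_pi_setOf_apply_eq μ hij
  filter_upwards [hne] with u hu i j
  exact not_imp_not.1 (hu i j)

theorem measurePreserving_comp_perm (μ : Measure α) [SigmaFinite μ] (e : Equiv.Perm ι) :
    MeasurePreserving (fun u : ι → α => u ∘ e) (Measure.pi fun _ => μ)
      (Measure.pi fun _ => μ) := by
  convert measurePreserving_piCongrLeft (fun _ : ι => μ) e.symm using 1
  ext u i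
  simp [MeasurableEquiv.coe_piCongrLeft, Equiv.piCongrLeft_apply]

end Coordinates

variable [LinearOrder α] [TopologicalSpace α] [OrderClosedTopology α] [SecondCountableTopology α]
  [OpensMeasurableSpace α]

theorem measurableSet_setOf_monotone [Preorder ι] [Countable ι] :
    MeasurableSet {u : ι → α | Monotone u} := by
  simp only [Monotone, Set.ofPred_forall]
  exact .iInter fun i => .iInter fun j => .iInter fun _ =>
    measurableSet_le (measurable_pi_apply i) (measurable_pi_apply j)

theorem factorial_mul_measure_pi_setOf_monotone (m : ℕ) (μ : Measure α) [SigmaFinite μ]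
    [NullSingletonClass μ] :
    (m.factorial : ENNReal) * Measure.pi (fun _ : Fin m => μ) {u | Monotone u} =
      μ Set.univ ^ m := by
  let chamber (σ : Equiv.Perm (Fin m)) : Set (Fin m → α) := {u | Monotone (u ∘ σ)}
  have chamber_measurable (σ) : MeasurableSet (chamber σ) :=
    (measurePreserving_comp_perm μ σ).measurable measurableSet_setOf_monotone
  have measure_chamber (σ) : Measure.pi (fun _ => μ) (chamber σ) =
      Measure.pi (fun _ => μ) {u | Monotone u} :=
    (measurePreserving_comp_perm μ σ).measure_preimage
      measurableSet_setOf_monotone.nullMeasurableSet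
  have chambers_cover : ⋃ σ, chamber σ = Set.univ :=
    Set.iUnion_eq_univ_iff.2 fun u => ⟨Tuple.sort u, Tuple.monotone_sort u⟩
  have chambers_disjoint (σ τ) (hστ : σ ≠ τ) :
      AEDisjoint (Measure.pi fun _ => μ) (chamber σ) (chamber τ) := by
    refine measure_mono_null ?_ (ae_iff.1 (ae_pi_injective fun _ => μ))
    rintro u ⟨hσ, hτ⟩ hinj
    exact hστ <| Equiv.ext fun i => hinj (congrFun (Tuple.unique_monotone hσ hτ) i)
  calc (m.factorial : ENNReal) * Measure.pi (fun _ : Fin m => μ) {u | Monotone u}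
      = ∑ σ, Measure.pi (fun _ => μ) (chamber σ) := by
        simp [measure_chamber, Fintype.card_perm]
    _ = Measure.pi (fun _ => μ) (⋃ σ, chamber σ) := by
        rw [measure_iUnion₀ chambers_disjoint fun σ => (chamber_measurable σ).nullMeasurableSet,
          tsum_fintype]
    _ = μ Set.univ ^ m := by simp [chambers_cover, Measure.pi_univ]

end OrderedTuples

theorem simplexSet_eq_setOf_monotone_inter (m : ℕ) :
    simplexSet m = {u | Monotone u} ∩ Set.univ.pi fun _ => Set.Icc 0 1 := by
  ext u
  simp only [simplexSet, Set.mem_ofPred_eq, Set.mem_inter_iff, Set.mem_univ_pi,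
    Set.mem_Icc, Monotone]
  exact and_comm

theorem factorial_mul_volume_simplexSet (m : ℕ) :
    (m.factorial : ENNReal) * volume (simplexSet m) = 1 := by
  rw [simplexSet_eq_setOf_monotone_inter, ← Measure.restrict_apply measurableSet_setOf_monotone,
    volume_pi, Measure.restrict_pi_pi, factorial_mul_measure_pi_setOf_monotone]
  simp

theorem volume_real_simplexSet (m : ℕ) :
    volume.real (simplexSet m) = (m.factorial : ℝ)⁻¹ := by
  apply eq_inv_of_mul_eq_one_right
  simpa [Measure.real] using congrArg ENNReal.toReal (factorial_mul_volume_simplexSet m)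

theorem list_prod_apply_eq_smul {R M ι : Type*} [CommSemiring R] [AddCommMonoid M] [Module R M]
    {f : ι → Module.End R M} {c : ι → R} {x : M} (h : ∀ i, f i x = c i • x) (l : List ι) :
    (l.map f).prod x = (l.map c).prod • x := by
  induction l with
  | nil => simp
  | cons i l ih => simp [ih, h, smul_smul, mul_comm]

/-- The factor `p` collects the variables already split off in the induction; the case of interest
is `p = 1`. -/
theorem list_prod_pderiv_list_prod_X_mul {R ι κ : Type*} [CommSemiring R] [DecidableEq κ]
    {f g : ι → κ} (hfg : ∀ i j, f i = g j → i = j) {l : List ι} (hl : l.Nodup)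
    {p : MvPolynomial κ R} (hp : ∀ i ∈ l, pderiv (g i) p = 0) :
    (l.map fun i => (pderiv (g i)).toLinearMap).prod ((l.map fun i => X (f i)).prod * p) =
      if ∀ i ∈ l, f i = g i then p else 0 := by
  induction l generalizing p with
  | nil => simp
  | cons i l ih =>
    rw [List.nodup_cons] at hl
    rw [List.forall_mem_cons] at hp
    have hXp : ∀ j ∈ l, pderiv (g j) (X (f i) * p) = 0 := fun j hj => by
      have hne : f i ≠ g j := fun h => hl.1 (hfg i j h ▸ hj)
      simp [pderiv_X_of_ne hne, hp.2 j hj]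
    have hi : pderiv (g i) (X (f i) * p) = if f i = g i then p else 0 := by
      simp [pderiv_X, hp.1, Pi.single_apply]
    rw [List.map_cons, List.map_cons, List.prod_cons, List.prod_cons, mul_comm (X _), mul_assoc,
      Module.End.mul_apply, ih hl.2 hXp]
    by_cases hl' : ∀ j ∈ l, f j = g j
    · simp only [if_pos hl', List.forall_mem_cons, and_iff_left hl']
      exact hi
    · simp [hl']

theorem elemT_cons_one_X (n : ℕ) (σ : Equiv.Perm (Fin (2 * n))) :
    elemT (Fin.cons 1 fun i => (X (σ i) : Apol n)) =
      ∏ i, (X (i.succ, σ i) : Tens n (2 * n + 1)) := by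
  rw [elemT, Fin.prod_univ_succ]
  simp [embA]

theorem prod_Dop_elemT (n : ℕ) (σ τ : Equiv.Perm (Fin (2 * n))) :
    (List.ofFn fun i => Dop n (2 * n + 1) i.succ (τ i)).prod
      (elemT (Fin.cons 1 fun i => (X (σ i) : Apol n))) = if σ = τ then 1 else 0 := by
  have slots_distinct (i j : Fin (2 * n)) (h : (i.succ, σ i) = (j.succ, τ j)) : i = j :=
    Fin.succ_injective _ (Prod.ext_iff.1 h).1
  have h := list_prod_pderiv_list_prod_X_mul (R := Kc) (p := 1) slots_distinct
    (List.nodup_finRange _) (by simp)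
  rw [elemT_cons_one_X, ← Fin.prod_ofFn]
  simpa [Equiv.ext_iff, Dop, List.ofFn_eq_map] using h

theorem piOp_elemT (n : ℕ) (σ : Equiv.Perm (Fin (2 * n))) :
    piOp n (elemT (Fin.cons 1 fun i => (X (σ i) : Apol n))) = (Equiv.Perm.sign σ : ℤ) := by
  simp [piOp, LinearMap.sum_apply, prod_Dop_elemT]

theorem piOp_c2n (n : ℕ) : piOp n (c2n n) = C ((2 * n).factorial : Kc) := by
  have sign_smul_sign (σ : Equiv.Perm (Fin (2 * n))) :
      (Equiv.Perm.sign σ : ℤ) • ((Equiv.Perm.sign σ : ℤ) : Tens n (2 * n + 1)) = 1 := by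
    rw [zsmul_eq_mul, ← Int.cast_mul, Int.units_coe_mul_self, Int.cast_one]
  simp only [c2n, map_sum, map_zsmul, piOp_elemT, sign_smul_sign]
  simp [Fintype.card_perm]

theorem alphaOp_C (n k : ℕ) (i j : Fin k) (c : Kc) : alphaOp n k i j (C c) = 0 := by
  simp [alphaOp, Dop, LinearMap.sum_apply]

theorem alphaPowProd_C (n k : ℕ) (K : Pairs k → ℕ) (c : Kc) :
    alphaPowProd n k K (C c) = if K = 0 then C c else 0 := by
  have alphaOp_pow_C (p : Pairs k) :
      (alphaOp n k p.1.1 p.1.2 ^ K p) (C c) = (0 : Kc) ^ K p • C c := by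
    cases K p with
    | zero => simp
    | succ m => simp [pow_succ, alphaOp_C]
  rw [alphaPowProd, list_prod_apply_eq_smul alphaOp_pow_C, Finset.prod_map_toList,
    Finset.prod_pow_eq_pow_sum, zero_pow_eq]
  simp [funext_iff]

theorem tau_of_piOp_eq_C (n : ℕ) {a : Tens n (2 * n + 1)} {c : Kc} (ha : piOp n a = C c) :
    tau n a = algebraMap ℂ Kc ((2 * n).factorial : ℂ)⁻¹ * c := by
  rw [tau, ha, Finset.sum_eq_single_of_mem 0 (by simp)]
  · simp [alphaPowProd_C, volume_real_simplexSet]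
  · intro K _ hK
    simp [alphaPowProd_C, hK]

/-- `τ_{2n}(c_{2n}) = 1`. -/
theorem tau_c2n (n : ℕ) : tau n (c2n n) = 1 := by
  rw [tau_of_piOp_eq_C n (piOp_c2n n), ← map_natCast (algebraMap ℂ Kc), ← map_mul,
    inv_mul_cancel₀ (Nat.cast_ne_zero.2 (Nat.factorial_ne_zero _)), map_one]

end
end

section
/- For all pairwise distinct complex numbers x, y, z: ∫∫_{0≤u_1≤u_2≤1} exp((1−2u_1)x + (2u_1−2u_2+1)y + (2u_2−1)z) du_1 du_2 = −[(x−y)e^{x+y−z} + (y−z)e^{y+z−x} + (z−x)e^{z+x−y}] / (4(x−y)(y−z)(z−x)). Consequently, writing F(x,y,z) ∈ ℂ[[x,y,z]] for the Taylor expansion at the origin of this (analytically continued) function, one has τ_2 = μ_2 ∘ F(εα_{01}, εα_{12}, εα_{20}) ∘ π_2 on A^pol_2 ⊗ A^pol_2 ⊗ A^pol_2. -/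
noncomputable section
open MvPolynomial MeasureTheory

/-- The simplex `{0 ≤ u_1 ≤ u_2 ≤ 1} ⊂ ℝ²`. -/
def delta2 : Set (Fin 2 → ℝ) := {u | 0 ≤ u 0 ∧ u 0 ≤ u 1 ∧ u 1 ≤ 1}

/-- The entire function `F(x,y,z) = ∫∫_{0≤u_1≤u_2≤1} e^{(1−2u_1)x+(2u_1−2u_2+1)y+(2u_2−1)z} du`,
whose Taylor expansion at the origin is used below. -/
def Ffun (x y z : ℂ) : ℂ :=
  ∫ u in delta2, Complex.exp ((1 - 2*(u 0 : ℝ))*x + (2*(u 0 : ℝ) - 2*(u 1 : ℝ) + 1)*y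
    + (2*(u 1 : ℝ) - 1)*z)

/-- The Taylor coefficient of `F` at the origin in multidegree `(a,b,c)`. -/
def Fcoeff (a b c : ℕ) : ℂ :=
  ((a.factorial * b.factorial * c.factorial : ℕ) : ℂ)⁻¹ *
    ((∫ u in delta2,
        (1 - 2*u 0)^a * (2*u 0 - 2*u 1 + 1)^b * (2*u 1 - 1)^c : ℝ) : ℂ)

/-!
On the simplex the exponent of `F` is `(x + y - z) + 2 (y - x) u₁ + 2 (z - y) u₂`, so Fubini reduces
the closed form to integrals of exponentials in one variable. For the operator identity, compare the
two series term by term: passing from the ordered pair `(0, 2)` to the cyclic one `(2, 0)` replaces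
`α₀₂` by `-α₂₀` and `2 u₀ - 2 u₂ + 1` by `-(2 u₂ - 1)`, and the resulting signs cancel.
-/

section Triangle

variable {E : Type*} [NormedAddCommGroup E] [NormedSpace ℝ E]

theorem setIntegral_triangle {a b : ℝ} (hab : a ≤ b) {f : ℝ × ℝ → E}
    (hf : IntegrableOn f {p | a ≤ p.1 ∧ p.1 ≤ p.2 ∧ p.2 ≤ b}) :
    ∫ p in {p : ℝ × ℝ | a ≤ p.1 ∧ p.1 ≤ p.2 ∧ p.2 ≤ b}, f p =
      ∫ t in a..b, ∫ s in a..t, f (s, t) := by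
  set S : Set (ℝ × ℝ) := {p | a ≤ p.1 ∧ p.1 ≤ p.2 ∧ p.2 ≤ b}
  have hS : MeasurableSet S := by measurability
  have slice (t : ℝ) : ∫ s, S.indicator f (s, t) =
      (Set.Icc a b).indicator (fun t ↦ ∫ s in a..t, f (s, t)) t := by
    by_cases ht : t ∈ Set.Icc a b
    · rw [Set.indicator_of_mem ht, intervalIntegral.integral_of_le ht.1,
        ← integral_Icc_eq_integral_Ioc, ← integral_indicator measurableSet_Icc]
      congr 1 with s
      have mem_iff : (s, t) ∈ S ↔ s ∈ Set.Icc a t :=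
        ⟨fun h ↦ ⟨h.1, h.2.1⟩, fun h ↦ ⟨h.1, h.2, ht.2⟩⟩
      simp only [Set.indicator_apply, mem_iff]
    · have notMem (s : ℝ) : (s, t) ∉ S := fun h ↦ ht ⟨h.1.trans h.2.1, h.2.2⟩
      simp only [Set.indicator_of_notMem ht, Set.indicator_of_notMem (notMem _), integral_zero]
  calc ∫ p in S, f p = ∫ p, S.indicator f p := (integral_indicator hS).symm
    _ = ∫ t, ∫ s, S.indicator f (s, t) :=
      integral_prod_symm _ ((integrable_indicator_iff hS).2 hf)
    _ = ∫ t in Set.Icc a b, ∫ s in a..t, f (s, t) := by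
      simp_rw [slice, integral_indicator measurableSet_Icc]
    _ = ∫ t in a..b, ∫ s in a..t, f (s, t) := by
      rw [intervalIntegral.integral_of_le hab, integral_Icc_eq_integral_Ioc]

theorem isCompact_triangle (a b : ℝ) :
    IsCompact {p : ℝ × ℝ | a ≤ p.1 ∧ p.1 ≤ p.2 ∧ p.2 ≤ b} := by
  refine (isCompact_Icc (a := (a, a)) (b := (b, b))).of_isClosed_subset ?_ ?_
  · exact (isClosed_le continuous_const continuous_fst).inter
      ((isClosed_le continuous_fst continuous_snd).inter
        (isClosed_le continuous_snd continuous_const))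
  · rintro ⟨s, t⟩ ⟨has, hst, htb⟩
    exact ⟨⟨has, has.trans hst⟩, ⟨hst.trans htb, htb⟩⟩

theorem setIntegral_delta2 {f : ℝ × ℝ → E} (hf : Continuous f) :
    ∫ u in delta2, f (u 0, u 1) = ∫ t in (0 : ℝ)..1, ∫ s in (0 : ℝ)..t, f (s, t) := by
  rw [← setIntegral_triangle zero_le_one
    (hf.continuousOn.integrableOn_compact (isCompact_triangle 0 1))]
  exact (volume_preserving_finTwoArrow ℝ).setIntegral_preimage_emb
    MeasurableEquiv.finTwoArrow.measurableEmbedding f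
    {p | 0 ≤ p.1 ∧ p.1 ≤ p.2 ∧ p.2 ≤ 1}

end Triangle

theorem integral_integral_exp_mul_add {a b : ℂ} (ha : a ≠ 0) (hb : b ≠ 0) (hab : a + b ≠ 0)
    (T : ℝ) :
    ∫ t in (0 : ℝ)..T, ∫ s in (0 : ℝ)..t, Complex.exp (a * s + b * t) =
      ((Complex.exp ((a + b) * T) - 1) / (a + b) - (Complex.exp (b * T) - 1) / b) / a := by
  have inner (t : ℝ) : ∫ s in (0 : ℝ)..t, Complex.exp (a * s + b * t) =
      (Complex.exp ((a + b) * t) - Complex.exp (b * t)) / a := by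
    simp_rw [Complex.exp_add, intervalIntegral.integral_mul_const, integral_exp_mul_complex ha,
      add_mul, Complex.exp_add, Complex.ofReal_zero, mul_zero, Complex.exp_zero]
    ring
  simp_rw [inner]
  rw [intervalIntegral.integral_div, intervalIntegral.integral_sub
      (Continuous.intervalIntegrable (by fun_prop) _ _)
      (Continuous.intervalIntegrable (by fun_prop) _ _),
    integral_exp_mul_complex hab, integral_exp_mul_complex hb]
  simp only [Complex.ofReal_zero, mul_zero, Complex.exp_zero]

theorem Ffun_eq_exp_mul_integral (x y z : ℂ) :
    Ffun x y z = Complex.exp (x + y - z) *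
      ∫ t in (0 : ℝ)..1, ∫ s in (0 : ℝ)..t, Complex.exp (2 * (y - x) * s + 2 * (z - y) * t) := by
  rw [← setIntegral_delta2 (f := fun p ↦ Complex.exp (2 * (y - x) * p.1 + 2 * (z - y) * p.2))
    (by fun_prop), ← integral_const_mul]
  refine integral_congr_ae (.of_forall fun u ↦ ?_)
  dsimp only
  rw [← Complex.exp_add]
  ring_nf

theorem Ffun_eq_of_ne {x y z : ℂ} (hxy : x ≠ y) (hyz : y ≠ z) (hzx : z ≠ x) :
    Ffun x y z =
      -((x - y) * Complex.exp (x + y - z) + (y - z) * Complex.exp (y + z - x)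
          + (z - x) * Complex.exp (z + x - y)) / (4 * (x - y) * (y - z) * (z - x)) := by
  have hxy' : x - y ≠ 0 := sub_ne_zero.2 hxy
  have hyz' : y - z ≠ 0 := sub_ne_zero.2 hyz
  have hzx' : z - x ≠ 0 := sub_ne_zero.2 hzx
  have ha : 2 * (y - x) ≠ 0 := mul_ne_zero two_ne_zero (sub_ne_zero.2 hxy.symm)
  have hb : 2 * (z - y) ≠ 0 := mul_ne_zero two_ne_zero (sub_ne_zero.2 hyz.symm)
  have hsum : 2 * (y - x) + 2 * (z - y) = 2 * (z - x) := by ring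
  have exp_yzx : Complex.exp (y + z - x) = Complex.exp (x + y - z) * Complex.exp (2 * (z - x)) := by
    rw [← Complex.exp_add]
    ring_nf
  have exp_zxy : Complex.exp (z + x - y) = Complex.exp (x + y - z) * Complex.exp (2 * (z - y)) := by
    rw [← Complex.exp_add]
    ring_nf
  rw [Ffun_eq_exp_mul_integral, integral_integral_exp_mul_add ha hb
    (hsum ▸ mul_ne_zero two_ne_zero hzx'), hsum, exp_yzx, exp_zxy, Complex.ofReal_one, mul_one,
    mul_one, ← neg_sub x y, ← neg_sub y z]
  field_simp
  ring

theorem commute_pderiv {σ R : Type*} [CommRing R] (i j : σ) :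
    Commute (pderiv (R := R) i).toLinearMap (pderiv j).toLinearMap := by
  have bracket_eq_zero : ⁅pderiv (R := R) i, pderiv (R := R) j⁆ = 0 := by
    classical
    refine derivation_ext fun k ↦ ?_
    simp [Derivation.commutator_apply, pderiv_X, Pi.single_apply, apply_ite]
  exact LinearMap.ext fun f ↦ sub_eq_zero.1 (DFunLike.congr_fun bracket_eq_zero f)

section AlphaOp

variable (n k : ℕ)

theorem commute_alphaOp (i j i' j' : Fin k) :
    Commute (alphaOp n k i j) (alphaOp n k i' j') := by
  have hD (a b c d : Fin k) (v₁ v₂ v₃ v₄ : Fin (2 * n)) :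
      Commute (Dop n k a v₁ * Dop n k b v₂) (Dop n k c v₃ * Dop n k d v₄) :=
    ((commute_pderiv _ _).mul_right (commute_pderiv _ _)).mul_left
      ((commute_pderiv _ _).mul_right (commute_pderiv _ _))
  refine .smul_left (.smul_right ?_ _) _
  refine .sum_left _ _ _ fun r _ ↦ .sum_right _ _ _ fun r' _ ↦ ?_
  exact .sub_left (R := Module.End Kc (Tens n k))
    (.sub_right (R := Module.End Kc (Tens n k)) (hD ..) (hD ..))
    (.sub_right (R := Module.End Kc (Tens n k)) (hD ..) (hD ..))

theorem alphaOp_swap (i j : Fin k) : alphaOp n k i j = -alphaOp n k j i := by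
  have hD (v w : Fin (2 * n)) : Dop n k i v * Dop n k j w = Dop n k j w * Dop n k i v :=
    (commute_pderiv _ _).eq
  refine LinearMap.ext fun f ↦ ?_
  simp only [alphaOp, hD, LinearMap.neg_apply, LinearMap.smul_apply, LinearMap.sum_apply,
    LinearMap.sub_apply, ← smul_neg, ← Finset.sum_neg_distrib, neg_sub]

variable {n k}

theorem alphaPowProd_eq_prod_ofFn {m : ℕ} (e : Fin m ≃ Pairs k) (K : Pairs k → ℕ) :
    alphaPowProd n k K =
      (List.ofFn fun i ↦ alphaOp n k (e i).1.1 (e i).1.2 ^ K (e i)).prod := by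
  have perm : (Finset.univ : Finset (Pairs k)).toList.Perm (List.ofFn e) :=
    (List.perm_ext_iff_of_nodup (Finset.nodup_toList _) (List.nodup_ofFn.2 e.injective)).2
      fun p ↦ by simp [List.mem_ofFn, e.surjective p]
  rw [alphaPowProd, (perm.map _).prod_eq', List.map_ofFn, Function.comp_def]
  rw [List.pairwise_map]
  exact List.pairwise_of_forall fun p q ↦ (commute_alphaOp n k _ _ _ _).pow_pow _ _

end AlphaOp

/-- The pairs `i < j` in `Fin 3`, enumerated so that they match the variables `x, y, z` of `F`.
The last one, `(0, 2)`, is the cyclic pair `(2, 0)` of the formula for `τ₂` reversed. -/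
def cyclicPairs : Fin 3 ≃ Pairs (2 * 1 + 1) :=
  Equiv.ofBijective ![⟨(0, 1), by decide⟩, ⟨(1, 2), by decide⟩, ⟨(0, 2), by decide⟩] (by decide)

theorem alphaPowProd_eq_cyclic (K : Pairs (2 * 1 + 1) → ℕ) :
    alphaPowProd 1 (2 * 1 + 1) K = (-1 : Kc) ^ K (cyclicPairs 2) •
      (alphaOp 1 (2 * 1 + 1) 0 1 ^ K (cyclicPairs 0) *
        alphaOp 1 (2 * 1 + 1) 1 2 ^ K (cyclicPairs 1) *
        alphaOp 1 (2 * 1 + 1) 2 0 ^ K (cyclicPairs 2)) := by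
  calc alphaPowProd 1 (2 * 1 + 1) K
    _ = alphaOp 1 (2 * 1 + 1) 0 1 ^ K (cyclicPairs 0) *
          alphaOp 1 (2 * 1 + 1) 1 2 ^ K (cyclicPairs 1) *
          alphaOp 1 (2 * 1 + 1) 0 2 ^ K (cyclicPairs 2) := by
      simp only [alphaPowProd_eq_prod_ofFn cyclicPairs, List.ofFn_succ, List.ofFn_zero,
        List.prod_cons, List.prod_nil, mul_one, mul_assoc]
      rfl
    _ = _ := by
      rw [alphaOp_swap 1 _ 0 2, ← neg_one_smul Kc (alphaOp _ _ _ _), smul_pow, mul_smul_comm]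

theorem simplexSet_two : simplexSet 2 = delta2 := by
  ext u
  simp only [simplexSet, delta2, Set.mem_ofPred_eq, Fin.forall_fin_two]
  constructor
  · rintro ⟨⟨h0, h1⟩, h⟩
    exact ⟨h0.1, h.1.2 (by decide), h1.2⟩
  · rintro ⟨h0, h01, h1⟩
    exact ⟨⟨⟨h0, h01.trans h1⟩, h0.trans h01, h1⟩,
      ⟨fun _ ↦ le_rfl, fun _ ↦ h01⟩, fun h ↦ absurd h (by decide), fun _ ↦ le_rfl⟩

theorem setIntegral_simplexSet_prod_pairs (K : Pairs (2 * 1 + 1) → ℕ) :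
    ∫ u in simplexSet (2 * 1), ∏ p : Pairs (2 * 1 + 1),
        (2 * cons0 (2 * 1) u p.1.1 - 2 * cons0 (2 * 1) u p.1.2 + 1) ^ K p =
      (-1) ^ K (cyclicPairs 2) * ∫ u in delta2,
        (1 - 2 * u 0) ^ K (cyclicPairs 0) * (2 * u 0 - 2 * u 1 + 1) ^ K (cyclicPairs 1) *
          (2 * u 1 - 1) ^ K (cyclicPairs 2) := by
  rw [← integral_const_mul, simplexSet_two]
  refine integral_congr_ae (.of_forall fun u ↦ ?_)
  have factor_zero : 2 * cons0 2 u (cyclicPairs 0).1.1 - 2 * cons0 2 u (cyclicPairs 0).1.2 + 1 =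
      1 - 2 * u 0 := by
    change 2 * 0 - 2 * u 0 + 1 = _
    ring
  have factor_one : 2 * cons0 2 u (cyclicPairs 1).1.1 - 2 * cons0 2 u (cyclicPairs 1).1.2 + 1 =
      2 * u 0 - 2 * u 1 + 1 := rfl
  have factor_two : 2 * cons0 2 u (cyclicPairs 2).1.1 - 2 * cons0 2 u (cyclicPairs 2).1.2 + 1 =
      -1 * (2 * u 1 - 1) := by
    change 2 * 0 - 2 * u 1 + 1 = _
    ring
  dsimp only
  rw [← cyclicPairs.prod_comp, Fin.prod_univ_three, factor_zero, factor_one, factor_two, mul_pow]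
  ring

theorem setIntegral_mul_inv_factorial_eq_Fcoeff (K : Pairs (2 * 1 + 1) → ℕ) :
    ((∫ u in simplexSet (2 * 1), ∏ p : Pairs (2 * 1 + 1),
        (2 * cons0 (2 * 1) u p.1.1 - 2 * cons0 (2 * 1) u p.1.2 + 1) ^ K p : ℝ) : ℂ) *
        (∏ p : Pairs (2 * 1 + 1), ((K p).factorial : ℂ))⁻¹ =
      (-1) ^ K (cyclicPairs 2) *
        Fcoeff (K (cyclicPairs 0)) (K (cyclicPairs 1)) (K (cyclicPairs 2)) := by
  rw [setIntegral_simplexSet_prod_pairs, ← cyclicPairs.prod_comp, Fin.prod_univ_three, Fcoeff]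
  push_cast
  ring

theorem tau_one_eq_sum_Fcoeff (a : Tens 1 (2 * 1 + 1)) :
    tau 1 a =
      ∑ K ∈ Fintype.piFinset (fun _ : Fin 3 ↦ Finset.range (a.totalDegree + 1)),
        (algebraMap ℂ Kc (Fcoeff (K 0) (K 1) (K 2)) * eps ^ (K 0 + K 1 + K 2)) •
          constantCoeff
            ((alphaOp 1 (2 * 1 + 1) 0 1 ^ K 0 * alphaOp 1 (2 * 1 + 1) 1 2 ^ K 1 *
              alphaOp 1 (2 * 1 + 1) 2 0 ^ K 2) (piOp 1 a)) := by
  refine Finset.sum_equiv (cyclicPairs.symm.arrowCongr (.refl ℕ)) (fun K ↦ ?_) fun K _ ↦ ?_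
  · simp only [Fintype.mem_piFinset]
    exact cyclicPairs.forall_congr_right.symm
  have apply_eq (i : Fin 3) : cyclicPairs.symm.arrowCongr (.refl ℕ) K i = K (cyclicPairs i) := rfl
  have sign_cancel : (-1 : Kc) ^ K (cyclicPairs 2) * (-1) ^ K (cyclicPairs 2) = 1 := by
    rw [← mul_pow, neg_one_mul, neg_neg, one_pow]
  simp only [apply_eq]
  rw [setIntegral_mul_inv_factorial_eq_Fcoeff, ← cyclicPairs.sum_comp, Fin.sum_univ_three,
    alphaPowProd_eq_cyclic, LinearMap.smul_apply, constantCoeff_smul, smul_smul, map_mul, map_pow,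
    map_neg, map_one, mul_assoc (_ ^ _), mul_right_comm, sign_cancel,
    one_mul]

/-- for pairwise distinct `x,y,z ∈ ℂ`,
`F(x,y,z) = −[(x−y)e^{x+y−z} + (y−z)e^{y+z−x} + (z−x)e^{z+x−y}]/(4(x−y)(y−z)(z−x))`;
consequently, `τ_2 = μ_2 ∘ F(εα_{01}, εα_{12}, εα_{20}) ∘ π_2` where `F` is expanded as
its Taylor series at the origin. -/
theorem tau2_formula :
    (∀ x y z : ℂ, x ≠ y → y ≠ z → z ≠ x →
      Ffun x y z =
        -((x-y)*Complex.exp (x+y-z) + (y-z)*Complex.exp (y+z-x) + (z-x)*Complex.exp (z+x-y))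
          / (4*(x-y)*(y-z)*(z-x))) ∧
    (∀ a : Tens 1 (2*1+1),
      tau 1 a =
        ∑ K ∈ Fintype.piFinset (fun _ : Fin 3 => Finset.range (a.totalDegree + 1)),
          (algebraMap ℂ Kc (Fcoeff (K 0) (K 1) (K 2)) * eps ^ (K 0 + K 1 + K 2)) •
            constantCoeff
              ((alphaOp 1 (2*1+1) 0 1 ^ (K 0) * alphaOp 1 (2*1+1) 1 2 ^ (K 1)
                * alphaOp 1 (2*1+1) 2 0 ^ (K 2)) (piOp 1 a))) := by
  exact ⟨fun _ _ _ ↦ Ffun_eq_of_ne, tau_one_eq_sum_Fcoeff⟩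

end
end
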